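/- Let V ∈ 𝒫^{s,p}_q(ℝⁿ), g ∈ W^{s,p}(ℝⁿ), K ∈ 𝒦_p, and let u ∈ Y^{s,p}_g(Ω)^+ be a weak supersolution of L^p_K u + V|u|^{p−2}u = 0 in Ω with exterior data g, with u ≥ 0 in B_R(x₀) ⊂ Ω. For a, b ∈ (0,1) set v(x) = ln( (a+b)/(u(x)+b) ), and for d > 0 set v̄ = min( max(v, 0), d ). Then there is a constant C > 0 depending only on n, s, p, λ, Λ and Ω such that for every r ∈ (0, R/2): ⨍_{B_r(x₀)} | v̄(x) − v̄_{B_r(x₀)} |^p dx ≤ C·[ b^{−(p−1)}·(r/R)^{ps}·[𝒯_R(u_−;x₀)]^{p−1} + (1 + ‖V_+‖_{L^q(Ω)}) ], where v̄_B denotes the average of v̄ over the ball B and u_− = max{−u,0}. -/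

import Mathlib

open MeasureTheory Real Set Metric Filter ENNReal

noncomputable section

abbrev Rn (n : ℕ) : Type := EuclideanSpace ℝ (Fin n)

namespace NLS

/-- The normalization constant `c_{n,p,s}`. -/
def cnps (n : ℕ) (p s : ℝ) : ℝ :=
  Real.Gamma (((n : ℝ) + p) / 2) * p * (1 - s) /
    (Real.pi ^ (((n : ℝ) - 1) / 2) * Real.Gamma ((p + 1) / 2))

/-- Membership in the kernel class `𝒦_p`. -/
def KernelClass (n : ℕ) (p s lam Lam : ℝ) (K : Rn n → ℝ) : Prop :=
  Measurable K ∧ (∀ y, K (-y) = K y) ∧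
    ∀ y : Rn n, y ≠ 0 →
      cnps n p s * lam * ‖y‖ ^ (-(n : ℝ) - p * s) ≤ K y ∧
        K y ≤ cnps n p s * Lam * ‖y‖ ^ (-(n : ℝ) - p * s)

/-- `H_p(t) = |t|^{p-2} t`. -/
def Hp (p t : ℝ) : ℝ := |t| ^ (p - 2) * t

/-- Positive part of a function. -/
def plusPart {n : ℕ} (f : Rn n → ℝ) : Rn n → ℝ := fun x => max (f x) 0

/-- Negative part of a function. -/
def minusPart {n : ℕ} (f : Rn n → ℝ) : Rn n → ℝ := fun x => max (-f x) 0

/-- The Gagliardo integrand `|u(x)-u(y)|^p |x-y|^{-n-ps}`. -/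
def gagliardoIntegrand (n : ℕ) (p s : ℝ) (u : Rn n → ℝ) (z : Rn n × Rn n) : ℝ :=
  |u z.1 - u z.2| ^ p * ‖z.1 - z.2‖ ^ (-(n : ℝ) - p * s)

/-- The Gagliardo seminorm `[u]_{W^{s,p}(U)}`. -/
def gagliardoSemi (n : ℕ) (p s : ℝ) (U : Set (Rn n)) (u : Rn n → ℝ) : ℝ :=
  (∫ z in U ×ˢ U, gagliardoIntegrand n p s u z) ^ (1 / p)

/-- The `L^p(U)` norm. -/
def lpNormOn (n : ℕ) (p : ℝ) (U : Set (Rn n)) (u : Rn n → ℝ) : ℝ :=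
  (∫ x in U, |u x| ^ p) ^ (1 / p)

/-- The `W^{s,p}(U)` norm. -/
def wspNorm (n : ℕ) (p s : ℝ) (U : Set (Rn n)) (u : Rn n → ℝ) : ℝ :=
  lpNormOn n p U u + gagliardoSemi n p s U u

/-- Membership in the fractional Sobolev space `W^{s,p}(U)`. -/
def MemWsp (n : ℕ) (p s : ℝ) (U : Set (Rn n)) (u : Rn n → ℝ) : Prop :=
  Measurable u ∧ IntegrableOn (fun x => |u x| ^ p) U ∧
    IntegrableOn (gagliardoIntegrand n p s u) (U ×ˢ U)

/-- `ℝ^{2n}_Ω = ℝ^{2n} ∖ (Ωᶜ × Ωᶜ)`. -/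
def R2n (n : ℕ) (Ω : Set (Rn n)) : Set (Rn n × Rn n) := {z | z.1 ∈ Ω ∨ z.2 ∈ Ω}

/-- Membership in `X^{s,p}(Ω)`. -/
def MemX (n : ℕ) (p s : ℝ) (Ω : Set (Rn n)) (u : Rn n → ℝ) : Prop :=
  Measurable u ∧ IntegrableOn (fun x => |u x| ^ p) Ω ∧
    IntegrableOn (gagliardoIntegrand n p s u) (R2n n Ω)

/-- Membership in `X^{s,p}_0(Ω)`. -/
def MemX0 (n : ℕ) (p s : ℝ) (Ω : Set (Rn n)) (u : Rn n → ℝ) : Prop :=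
  MemX n p s Ω u ∧ ∀ᵐ x ∂(volume : Measure (Rn n)), x ∉ Ω → u x = 0

/-- The norm `‖u‖_{X^{s,p}_0(Ω)}`. -/
def normX0 (n : ℕ) (p s : ℝ) (Ω : Set (Rn n)) (u : Rn n → ℝ) : ℝ :=
  (∫ z in R2n n Ω, gagliardoIntegrand n p s u z) ^ (1 / p)

/-- Open axis-parallel cube with center `c` and half side-length `h`. -/
def cube (n : ℕ) (c : Fin n → ℝ) (h : ℝ) : Set (Rn n) := {y | ∀ i, |y i - c i| < h}

/-- The `(A_1,A_1)` characteristic `[υ,ω]_{(A_1,A_1)}`. -/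
def A1const (n : ℕ) (υ ω : Rn n → ℝ) : ℝ≥0∞ :=
  ⨆ (c : Fin n → ℝ) (h : ℝ) (_ : 0 < h),
    ENNReal.ofReal (⨍ y in cube n c h, υ y) *
      essSup (fun y => (ENNReal.ofReal (ω y))⁻¹) (volume.restrict (cube n c h))

/-- `(υ,ω)` belongs to the `(A_1,A_1)`-Muckenhoupt class. -/
def A1pair (n : ℕ) (υ ω : Rn n → ℝ) : Prop := A1const n υ ω < ⊤

/-- `ω` belongs to the `A_1`-Muckenhoupt class. -/
def A1 (n : ℕ) (ω : Rn n → ℝ) : Prop := A1pair n ω ω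

/-- Membership in the potential class `𝒫^{s,p}_q(ℝⁿ)`. -/
structure IsPotential (n : ℕ) (p s q : ℝ) (V : Rn n → ℝ) : Prop where
  measurable : Measurable V
  minusPart_locInt : LocallyIntegrable (minusPart V) volume
  plusPart_locLq : LocallyIntegrable (fun x => plusPart V x ^ q) volume
  exists_b : ∃ b : Rn n → ℝ, Measurable b ∧ (∀ᵐ x ∂(volume : Measure (Rn n)), 0 < b x) ∧
    (∃ M : ℝ, ∀ x, |b x| ≤ M) ∧
    LocallyIntegrable (fun x => (plusPart V x / b x) ^ q) volume ∧
    ∀ i : ℕ, 0 < i →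
      A1pair n (minusPart V) (fun x => max (b x) (1 / (i : ℝ)) / b x * plusPart V x) ∧
      A1 n (fun x => max (b x) (1 / (i : ℝ)) / b x * plusPart V x)

/-- Membership in the weighted class `L^p_V(Ω)`. -/
def MemLpV (n : ℕ) (p : ℝ) (Ω : Set (Rn n)) (V u : Rn n → ℝ) : Prop :=
  IntegrableOn (fun x => |u x| ^ p * plusPart V x) Ω ∧
    IntegrableOn (fun x => |u x| ^ p * minusPart V x) Ω

/-- Membership in `Y^{s,p}(Ω)`. -/
def MemY (n : ℕ) (p s : ℝ) (Ω : Set (Rn n)) (V u : Rn n → ℝ) : Prop :=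
  MemX n p s Ω u ∧ MemLpV n p Ω V u

/-- Membership in `Y^{s,p}_0(Ω)`. -/
def MemY0 (n : ℕ) (p s : ℝ) (Ω : Set (Rn n)) (V u : Rn n → ℝ) : Prop :=
  MemX0 n p s Ω u ∧ MemLpV n p Ω V u

/-- Membership in `Y^{s,p}_g(Ω)^+`. -/
def MemYgPlus (n : ℕ) (p s : ℝ) (Ω : Set (Rn n)) (V g u : Rn n → ℝ) : Prop :=
  MemY n p s Ω V u ∧ MemY0 n p s Ω V (fun x => max (g x - u x) 0)

/-- Membership in `Y^{s,p}_g(Ω)^-`. -/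
def MemYgMinus (n : ℕ) (p s : ℝ) (Ω : Set (Rn n)) (V g u : Rn n → ℝ) : Prop :=
  MemY n p s Ω V u ∧ MemY0 n p s Ω V (fun x => max (u x - g x) 0)

/-- Membership in `Y^{s,p}_g(Ω)`. -/
def MemYg (n : ℕ) (p s : ℝ) (Ω : Set (Rn n)) (V g u : Rn n → ℝ) : Prop :=
  MemYgPlus n p s Ω V g u ∧ MemYgMinus n p s Ω V g u

/-- The pairing `⟨u,φ⟩_{H_p,K}`. -/
def pairing (n : ℕ) (p : ℝ) (K u φ : Rn n → ℝ) : ℝ :=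
  ∫ z : Rn n × Rn n, Hp p (u z.1 - u z.2) * (φ z.1 - φ z.2) * K (z.1 - z.2)

/-- `u` is a weak subsolution of `L^p_K u + V|u|^{p-2}u = 0` in `Ω` with exterior data `g`. -/
def WeakSubsolution (n : ℕ) (p s : ℝ) (Ω : Set (Rn n)) (K V g u : Rn n → ℝ) : Prop :=
  MemYgMinus n p s Ω V g u ∧
    ∀ φ : Rn n → ℝ, MemY0 n p s Ω V φ → (∀ x, 0 ≤ φ x) →
      pairing n p K u φ + ∫ x : Rn n, V x * (|u x| ^ (p - 2) * u x) * φ x ≤ 0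

/-- `u` is a weak supersolution of `L^p_K u + V|u|^{p-2}u = 0` in `Ω` with exterior data `g`. -/
def WeakSupersolution (n : ℕ) (p s : ℝ) (Ω : Set (Rn n)) (K V g u : Rn n → ℝ) : Prop :=
  MemYgPlus n p s Ω V g u ∧
    ∀ φ : Rn n → ℝ, MemY0 n p s Ω V φ → (∀ x, 0 ≤ φ x) →
      0 ≤ pairing n p K u φ + ∫ x : Rn n, V x * (|u x| ^ (p - 2) * u x) * φ x

/-- `u` is a weak solution of `L^p_K u + V|u|^{p-2}u = 0` in `Ω` with exterior data `g`. -/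
def WeakSolution (n : ℕ) (p s : ℝ) (Ω : Set (Rn n)) (K V g u : Rn n → ℝ) : Prop :=
  MemYg n p s Ω V g u ∧
    ∀ φ : Rn n → ℝ, MemY0 n p s Ω V φ →
      pairing n p K u φ + ∫ x : Rn n, V x * (|u x| ^ (p - 2) * u x) * φ x = 0

/-- The surface measure `|S^{n-1}|` of the unit sphere of `ℝⁿ`. -/
def sphereArea (n : ℕ) : ℝ := n * (volume (Metric.ball (0 : Rn n) 1)).toReal

/-- The nonlocal tail `𝒯_r(u;x₀)`. -/
def tail (n : ℕ) (p s : ℝ) (u : Rn n → ℝ) (x₀ : Rn n) (r : ℝ) : ℝ :=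
  (p * s / sphereArea n * r ^ (p * s) *
      ∫ y in (Metric.ball x₀ r)ᶜ, |u y| ^ (p - 1) * ‖y - x₀‖ ^ (-(n : ℝ) - p * s)) ^ (1 / (p - 1))

def supOn {n : ℕ} (u : Rn n → ℝ) (B : Set (Rn n)) : ℝ := sSup (u '' B)
def infOn {n : ℕ} (u : Rn n → ℝ) (B : Set (Rn n)) : ℝ := sInf (u '' B)
def oscOn {n : ℕ} (u : Rn n → ℝ) (B : Set (Rn n)) : ℝ := supOn u B - infOn u B

/-- The `L^q(Ω)` norm, used for `‖V₊‖_{L^q(Ω)}`. -/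
def lqNormOn (n : ℕ) (q : ℝ) (Ω : Set (Rn n)) (f : Rn n → ℝ) : ℝ :=
  (∫ x in Ω, |f x| ^ q) ^ (1 / q)

/-- The Hölder seminorm `[u]_{C^ε(B)}`. -/
def holderSemi {n : ℕ} (ε : ℝ) (B : Set (Rn n)) (u : Rn n → ℝ) : ℝ :=
  sSup ((fun z : Rn n × Rn n => |u z.1 - u z.2| / ‖z.1 - z.2‖ ^ ε) ''
    ((B ×ˢ B) ∩ {z | z.1 ≠ z.2}))

/-- The sup norm `‖u‖_{C(B)}`. -/
def cNorm {n : ℕ} (B : Set (Rn n)) (u : Rn n → ℝ) : ℝ := sSup ((fun x => |u x|) '' B)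

/-- The Hölder norm `‖u‖_{C^ε(B)}`. -/
def holderNorm {n : ℕ} (ε : ℝ) (B : Set (Rn n)) (u : Rn n → ℝ) : ℝ :=
  cNorm B u + holderSemi ε B u

/-- `u` is locally `ε`-Hölder continuous in `Ω`. -/
def LocallyHolder {n : ℕ} (ε : ℝ) (Ω : Set (Rn n)) (u : Rn n → ℝ) : Prop :=
  ∀ (x₀ : Rn n) (r : ℝ), closure (Metric.ball x₀ r) ⊆ Ω →
    ∃ L : ℝ, ∀ x ∈ Metric.ball x₀ r, ∀ y ∈ Metric.ball x₀ r, |u x - u y| ≤ L * ‖x - y‖ ^ ε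

end NLS

open NLS

/- Test the supersolution inequality with `φ = η ^ p * (u + b) ^ (1 - p)`, where `η` is a cutoff
function between `B_r` and `B_{3r/2}`. A Picone-type inequality bounds the nonlocal integrand
`H_p(u(x) - u(y)) (φ(x) - φ(y))` inside `B_R` by the Gagliardo integrand of `η` minus that of
`log (u + b)` where `η = 1`; the interaction with the complement of `B_R` is controlled by the tail
of the negative part of `u`, since only the values `u(y) < 0` contribute with the wrong sign.
As `u ^ (p - 1) * φ ≤ 1`, the potential contributes at most the integral of `V₊` over `B_{3r/2}`,
which Hölder's inequality bounds. Truncation does not increase the Gagliardo energy, so a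
fractional Poincaré inequality on `B_r` turns the energy bound into the oscillation bound. -/

namespace NLS

section PowerInequalities

variable {p a b x y A B : ℝ}

lemma rpow_sub_one_mul_self (hx : 0 ≤ x) (hp : p ≠ 0) : x ^ (p - 1) * x = x ^ p := by
  rw [← Real.rpow_add_one' hx (by rwa [sub_add_cancel]), sub_add_cancel]

lemma rpow_one_sub (hx : 0 ≤ x) : x ^ (1 - p) = (x ^ (p - 1))⁻¹ := by
  rw [← Real.rpow_neg hx, neg_sub]

lemma add_rpow_le_two_rpow_mul (hp : 0 ≤ p) (ha : 0 ≤ a) (hb : 0 ≤ b) :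
    (a + b) ^ p ≤ 2 ^ p * (a ^ p + b ^ p) := by
  lift a to NNReal using ha
  lift b to NNReal using hb
  have h := ENNReal.add_rpow_le_two_rpow_mul_rpow_add_rpow a b hp
  rw [← ENNReal.coe_add, ← ENNReal.coe_rpow_of_nonneg _ hp, ← ENNReal.coe_rpow_of_nonneg _ hp,
    ← ENNReal.coe_rpow_of_nonneg _ hp, ← ENNReal.coe_ofNat, ← ENNReal.coe_rpow_of_nonneg _ hp,
    ← ENNReal.coe_add, ← ENNReal.coe_mul, ENNReal.coe_le_coe] at h
  exact_mod_cast h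

lemma rpow_sub_one_mul_le_add (hp : 1 ≤ p) (ha : 0 ≤ a) (hb : 0 ≤ b) :
    a ^ (p - 1) * b ≤ a ^ p + b ^ p := by
  have hp0 : p ≠ 0 := by linarith
  have : 0 ≤ p - 1 := sub_nonneg.2 hp
  rcases le_total a b with hab | hab
  · calc a ^ (p - 1) * b ≤ b ^ (p - 1) * b := by gcongr
      _ = b ^ p := rpow_sub_one_mul_self hb hp0
      _ ≤ a ^ p + b ^ p := le_add_of_nonneg_left (by positivity)
  · calc a ^ (p - 1) * b ≤ a ^ (p - 1) * a := by gcongr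
      _ = a ^ p := rpow_sub_one_mul_self ha hp0
      _ ≤ a ^ p + b ^ p := le_add_of_nonneg_right (by positivity)

lemma rpow_neg_le_mul_rpow_neg {c σ : ℝ} (ha : 0 < a) (hc : 0 < c) (hab : a ≤ c * b)
    (hσ : 0 ≤ σ) : b ^ (-σ) ≤ c ^ σ * a ^ (-σ) := by
  have hac : 0 < a / c := div_pos ha hc
  calc b ^ (-σ) ≤ (a / c) ^ (-σ) :=
        Real.rpow_le_rpow_of_nonpos hac (div_le_of_le_mul₀ hc.le
          (pos_of_mul_pos_right (ha.trans_le hab) hc.le).le (by rwa [mul_comm]))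
          (neg_nonpos.2 hσ)
    _ = c ^ σ * a ^ (-σ) := by
        rw [Real.div_rpow ha.le hc.le, Real.rpow_neg hc.le, div_inv_eq_mul, mul_comm]

lemma abs_rpow_one_sub_sub_le (hp : 1 ≤ p) (hb : 0 < b) (hA : b ≤ A) (hB : b ≤ B) :
    |A ^ (1 - p) - B ^ (1 - p)| ≤ (p - 1) * b ^ (-p) * |A - B| := by
  refine (convex_Ici b).norm_image_sub_le_of_norm_hasDerivWithin_le
    (f' := fun t => (1 - p) * t ^ (1 - p - 1))
    (fun t ht => (Real.hasDerivAt_rpow_const (Or.inl (hb.trans_le ht).ne')).hasDerivWithinAt)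
    (fun t ht => ?_) hB hA
  have ht0 : 0 < t := hb.trans_le ht
  rw [norm_mul, Real.norm_eq_abs, Real.norm_eq_abs, abs_of_nonpos (sub_nonpos.2 hp), neg_sub,
    abs_of_pos (by positivity), show 1 - p - 1 = -p by ring]
  exact mul_le_mul_of_nonneg_left (Real.rpow_le_rpow_of_nonpos hb ht (by linarith))
    (sub_nonneg.2 hp)

lemma abs_rpow_sub_rpow_le (hp : 1 ≤ p) (hA : A ∈ Icc (0 : ℝ) 1) (hB : B ∈ Icc (0 : ℝ) 1) :
    |A ^ p - B ^ p| ≤ p * |A - B| := by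
  refine (convex_Icc (0 : ℝ) 1).norm_image_sub_le_of_norm_hasDerivWithin_le
    (fun t _ => (Real.hasDerivAt_rpow_const (Or.inr hp)).hasDerivWithinAt)
    (fun t ht => ?_) hB hA
  rw [norm_mul, Real.norm_eq_abs, Real.norm_eq_abs, abs_of_nonneg (by linarith),
    abs_of_nonneg (Real.rpow_nonneg ht.1 _)]
  exact mul_le_of_le_one_right (by linarith) (Real.rpow_le_one ht.1 ht.2 (by linarith))

lemma abs_log_sub_log_le (hb : 0 < b) (hA : b ≤ A) (hB : b ≤ B) :
    |Real.log A - Real.log B| ≤ b⁻¹ * |A - B| := by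
  refine (convex_Ici b).norm_image_sub_le_of_norm_hasDerivWithin_le
    (fun t ht => (Real.hasDerivAt_log (hb.trans_le ht).ne').hasDerivWithinAt)
    (fun t ht => ?_) hB hA
  rw [Real.norm_eq_abs, abs_of_pos (inv_pos.2 (hb.trans_le ht))]
  exact inv_anti₀ hb ht

end PowerInequalities

section AlgebraicInequalities

variable {p A B ξ ζ t : ℝ}

lemma Hp_of_nonneg (hp : p ≠ 1) (ht : 0 ≤ t) : Hp p t = t ^ (p - 1) := by
  rw [Hp, abs_of_nonneg ht, ← rpow_sub_one_mul_self ht (sub_ne_zero.2 hp)]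
  ring_nf

lemma Hp_neg : Hp p (-t) = -Hp p t := by
  rw [Hp, Hp, abs_neg, mul_neg]

lemma abs_Hp (hp : p ≠ 1) : |Hp p t| = |t| ^ (p - 1) := by
  rw [← Hp_of_nonneg hp (abs_nonneg t), Hp, Hp, abs_mul, abs_abs,
    abs_of_nonneg (Real.rpow_nonneg (abs_nonneg t) _)]

lemma Hp_nonpos (ht : t ≤ 0) : Hp p t ≤ 0 :=
  mul_nonpos_of_nonneg_of_nonpos (Real.rpow_nonneg (abs_nonneg t) _) ht

lemma measurable_Hp : Measurable (Hp p) := by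
  unfold Hp
  fun_prop

lemma mul_exp_half_le_exp_sub_one (ht : 0 ≤ t) : t * Real.exp (t / 2) ≤ Real.exp t - 1 := by
  have hsinh : t / 2 ≤ Real.sinh (t / 2) := Real.self_le_sinh_iff.2 (by positivity)
  calc t * Real.exp (t / 2) ≤ 2 * Real.sinh (t / 2) * Real.exp (t / 2) := by
        gcongr
        linarith
    _ = Real.exp (t / 2 + t / 2) - Real.exp (-(t / 2) + t / 2) := by
        rw [Real.sinh_eq, Real.exp_add, Real.exp_add]
        ring
    _ = Real.exp t - 1 := by rw [add_halves, neg_add_cancel, Real.exp_zero]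

lemma sub_one_mul_rpow_le_exp_sub_one (hp : 1 ≤ p) (ht : 0 ≤ t) :
    (p - 1) * t ^ p ≤ (Real.exp t - 1) ^ (p - 1) * (1 - Real.exp (-((p - 1) * t))) := by
  have hσ : 0 ≤ p - 1 := sub_nonneg.2 hp
  set σ := p - 1
  have hgrowth : t ^ σ * Real.exp (σ * t / 2) ≤ (Real.exp t - 1) ^ σ := by
    calc t ^ σ * Real.exp (σ * t / 2) = (t * Real.exp (t / 2)) ^ σ := by
          rw [Real.mul_rpow ht (Real.exp_pos _).le, ← Real.exp_mul]
          ring_nf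
      _ ≤ (Real.exp t - 1) ^ σ :=
          Real.rpow_le_rpow (by positivity) (mul_exp_half_le_exp_sub_one ht) hσ
  have hdecay : σ * t * Real.exp (-(σ * t / 2)) ≤ 1 - Real.exp (-(σ * t)) := by
    calc σ * t * Real.exp (-(σ * t / 2))
        = σ * t * Real.exp (σ * t / 2) * Real.exp (-(σ * t)) := by
          rw [mul_assoc (σ * t), ← Real.exp_add]
          ring_nf
      _ ≤ (Real.exp (σ * t) - 1) * Real.exp (-(σ * t)) := by
          gcongr
          exact mul_exp_half_le_exp_sub_one (by positivity)
      _ = 1 - Real.exp (-(σ * t)) := by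
          rw [sub_mul, ← Real.exp_add, add_neg_cancel, Real.exp_zero, one_mul]
  calc σ * t ^ p
      = (t ^ σ * Real.exp (σ * t / 2)) * (σ * t * Real.exp (-(σ * t / 2))) := by
        rw [← rpow_sub_one_mul_self ht (by linarith : p ≠ 0), Real.exp_neg]
        change σ * (t ^ σ * t) = _
        field_simp
    _ ≤ _ := mul_le_mul hgrowth hdecay (by positivity)
        (Real.rpow_nonneg (sub_nonneg.2 (Real.one_le_exp ht)) _)

lemma Hp_sub_mul_rpow_sub_le_log (hp : 1 < p) (hA : 0 < A) (hB : 0 < B) :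
    Hp p (A - B) * (A ^ (1 - p) - B ^ (1 - p)) ≤
      -((p - 1) * |Real.log A - Real.log B| ^ p) := by
  wlog hBA : B ≤ A generalizing A B
  · have h := this hB hA (le_of_not_ge hBA)
    rw [← neg_sub A B, Hp_neg, abs_sub_comm] at h
    linarith
  have hlog : 0 ≤ Real.log A - Real.log B := sub_nonneg.2 (Real.log_le_log hB hBA)
  have hAexp : A = B * Real.exp (Real.log A - Real.log B) := by
    rw [Real.exp_sub, Real.exp_log hA, Real.exp_log hB, mul_div_cancel₀ _ hB.ne']
  rw [Hp_of_nonneg hp.ne' (sub_nonneg.2 hBA), abs_of_nonneg hlog]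
  set L := Real.log A - Real.log B
  have hexp : 0 ≤ Real.exp L - 1 := sub_nonneg.2 (Real.one_le_exp hlog)
  have hdiff : (A - B) ^ (p - 1) = B ^ (p - 1) * (Real.exp L - 1) ^ (p - 1) := by
    rw [← Real.mul_rpow hB.le hexp, hAexp, mul_sub_one]
  have hpow : A ^ (1 - p) = B ^ (1 - p) * Real.exp (-((p - 1) * L)) := by
    rw [hAexp, Real.mul_rpow hB.le (Real.exp_pos _).le, ← Real.exp_mul]
    ring_nf
  have hcancel : B ^ (p - 1) * B ^ (1 - p) = 1 := by
    rw [← Real.rpow_add hB, sub_add_sub_cancel, sub_self, Real.rpow_zero]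
  calc (A - B) ^ (p - 1) * (A ^ (1 - p) - B ^ (1 - p))
      = -(B ^ (p - 1) * B ^ (1 - p) *
          ((Real.exp L - 1) ^ (p - 1) * (1 - Real.exp (-((p - 1) * L))))) := by
        rw [hdiff, hpow]
        ring
    _ ≤ -((p - 1) * L ^ p) := by
        rw [hcancel, one_mul, neg_le_neg_iff]
        exact sub_one_mul_rpow_le_exp_sub_one hp.le hlog

lemma add_rpow_mul_add_rpow_one_sub_le {x y D : ℝ} (hp : 1 ≤ p) (hx : 0 ≤ x) (hy : 0 ≤ y)
    (hB : 0 < B) (hD : 0 < D) :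
    (x + y) ^ p * (B + D) ^ (1 - p) ≤ x ^ p * B ^ (1 - p) + y ^ p * D ^ (1 - p) := by
  have hperspective : ∀ {z T : ℝ}, 0 ≤ z → 0 < T → T * (z / T) ^ p = z ^ p * T ^ (1 - p) := by
    intro z T hz hT
    rw [Real.div_rpow hz hT.le, Real.rpow_sub hT, Real.rpow_one]
    field_simp
  have hconv := (convexOn_rpow hp).2 (div_nonneg hx hB.le) (div_nonneg hy hD.le)
    (by positivity : 0 ≤ B / (B + D)) (by positivity : 0 ≤ D / (B + D)) (by field_simp)
  simp only [smul_eq_mul] at hconv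
  have harg : B / (B + D) * (x / B) + D / (B + D) * (y / D) = (x + y) / (B + D) := by
    field_simp
  rw [harg] at hconv
  calc (x + y) ^ p * (B + D) ^ (1 - p)
      = (B + D) * ((x + y) / (B + D)) ^ p := (hperspective (by positivity) (by positivity)).symm
    _ ≤ (B + D) * (B / (B + D) * (x / B) ^ p + D / (B + D) * (y / D) ^ p) := by gcongr
    _ = B * (x / B) ^ p + D * (y / D) ^ p := by field_simp
    _ = _ := by rw [hperspective hx hB, hperspective hy hD]

lemma Hp_sub_mul_rpow_mul_sub_le (hp : 1 < p) (hA : 0 < A) (hB : 0 < B) (hξ : 0 ≤ ξ)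
    (hζ : 0 ≤ ζ) :
    Hp p (A - B) * (ξ ^ p * A ^ (1 - p) - ζ ^ p * B ^ (1 - p)) ≤ |ξ - ζ| ^ p := by
  wlog hBA : B ≤ A generalizing A B ξ ζ
  · have h := this hB hA hζ hξ (le_of_not_ge hBA)
    rw [← neg_sub A B, Hp_neg, abs_sub_comm] at h
    linarith
  rcases hBA.eq_or_lt with rfl | hlt
  · simp only [sub_self, Hp, mul_zero, zero_mul]
    positivity
  have hD : 0 < A - B := sub_pos.2 hlt
  have hξ_le : ξ ≤ ζ + |ξ - ζ| := by linarith [le_abs_self (ξ - ζ)]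
  have hpicone : ξ ^ p * A ^ (1 - p) ≤ ζ ^ p * B ^ (1 - p) + |ξ - ζ| ^ p * (A - B) ^ (1 - p) := by
    calc ξ ^ p * A ^ (1 - p) ≤ (ζ + |ξ - ζ|) ^ p * (B + (A - B)) ^ (1 - p) := by
          rw [add_sub_cancel]
          gcongr
      _ ≤ _ := add_rpow_mul_add_rpow_one_sub_le hp.le hζ (abs_nonneg _) hB hD
  calc Hp p (A - B) * (ξ ^ p * A ^ (1 - p) - ζ ^ p * B ^ (1 - p))
      ≤ (A - B) ^ (p - 1) * (|ξ - ζ| ^ p * (A - B) ^ (1 - p)) := by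
        rw [Hp_of_nonneg hp.ne' hD.le]
        gcongr
        linarith
    _ = |ξ - ζ| ^ p := by
        rw [rpow_one_sub hD.le, mul_left_comm, mul_inv_cancel₀ (by positivity), mul_one]

lemma Hp_sub_mul_rpow_mul_le {U W b : ℝ} (hp : 1 < p) (hU : 0 ≤ U) (hb : 0 < b) (hξ : 0 ≤ ξ) :
    Hp p (U - W) * (ξ ^ p * (U + b) ^ (1 - p)) ≤
      2 ^ (p - 1) * (ξ ^ p + b ^ (1 - p) * (max (-W) 0 ^ (p - 1) * ξ ^ p)) := by
  have hσ : 0 ≤ p - 1 := by linarith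
  have hneg : 0 ≤ max (-W) 0 := le_max_right _ _
  have hUb : 0 < U + b := by linarith
  rcases le_total (U - W) 0 with h | h
  · exact (mul_nonpos_of_nonpos_of_nonneg (Hp_nonpos h) (by positivity)).trans (by positivity)
  have hcancel : (U + b) ^ (p - 1) * (U + b) ^ (1 - p) = 1 := by
    rw [rpow_one_sub hUb.le, mul_inv_cancel₀ (by positivity)]
  have hanti : (U + b) ^ (1 - p) ≤ b ^ (1 - p) :=
    Real.rpow_le_rpow_of_nonpos hb (by linarith) (by linarith)
  calc Hp p (U - W) * (ξ ^ p * (U + b) ^ (1 - p))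
      ≤ (2 ^ (p - 1) * ((U + b) ^ (p - 1) + max (-W) 0 ^ (p - 1))) *
          (ξ ^ p * (U + b) ^ (1 - p)) := by
        rw [Hp_of_nonneg hp.ne' h]
        gcongr
        calc (U - W) ^ (p - 1) ≤ (U + b + max (-W) 0) ^ (p - 1) := by
              gcongr
              linarith [le_max_left (-W) 0]
          _ ≤ _ := add_rpow_le_two_rpow_mul hσ hUb.le hneg
    _ = 2 ^ (p - 1) * (ξ ^ p * ((U + b) ^ (p - 1) * (U + b) ^ (1 - p)) +
          (U + b) ^ (1 - p) * (max (-W) 0 ^ (p - 1) * ξ ^ p)) := by ring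
    _ ≤ _ := by
        rw [hcancel, mul_one]
        gcongr

end AlgebraicInequalities

section Cutoff

/-- `η` is a cutoff function with values in `[0, 1]` that equals `1` on `S`, vanishes outside `T`
and is `c`-Lipschitz. -/
structure IsCutoff {X : Type*} [PseudoMetricSpace X] (η : X → ℝ) (S T : Set X) (c : ℝ) :
    Prop where
  mem_Icc : ∀ x, η x ∈ Icc (0 : ℝ) 1
  eq_one : ∀ x ∈ S, η x = 1
  eq_zero : ∀ x ∉ T, η x = 0
  abs_sub_le : ∀ x y, |η x - η y| ≤ c * dist x y

variable {X : Type*} [PseudoMetricSpace X] {η : X → ℝ} {S T : Set X} {c : ℝ}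

lemma exists_isCutoff_thickening (S : Set X) {δ : ℝ} (hδ : 0 < δ) :
    ∃ η : X → ℝ, IsCutoff η S (thickening δ S) δ⁻¹ := by
  refine ⟨fun x => thickenedIndicator hδ S x, fun x => ⟨NNReal.coe_nonneg _, ?_⟩, fun x hx => ?_,
    fun x hx => ?_, fun x y => ?_⟩
  · exact_mod_cast thickenedIndicator_le_one hδ S x
  · exact_mod_cast thickenedIndicator_one hδ S hx
  · exact_mod_cast thickenedIndicator_zero hδ S hx
  · have h := (lipschitzWith_thickenedIndicator hδ S).dist_le_mul x y
    rwa [NNReal.dist_eq, NNReal.coe_inv, Real.coe_toNNReal δ hδ.le] at h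

lemma IsCutoff.nonneg (h : IsCutoff η S T c) (x : X) : 0 ≤ η x := (h.mem_Icc x).1

lemma IsCutoff.abs_sub_le_one (h : IsCutoff η S T c) (x y : X) : |η x - η y| ≤ 1 := by
  have hx := h.mem_Icc x
  have hy := h.mem_Icc y
  exact abs_sub_le_iff.2 ⟨by linarith [hx.2, hy.1], by linarith [hx.1, hy.2]⟩

lemma IsCutoff.measurable [MeasurableSpace X] [BorelSpace X] (h : IsCutoff η S T c) :
    Measurable η :=
  (LipschitzWith.of_dist_le' (K := c) fun x y => h.abs_sub_le x y).continuous.measurable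

end Cutoff

section CutoffKernel

variable {E : Type*} [NormedAddCommGroup E]

/-- The kernel `‖h‖ ^ θ` with its singularity at the origin cut off by the factor
`min (1, c ‖h‖) ^ p`, which bounds `|η x - η (x + h)| ^ p` when `η` is a `c`-Lipschitz function
with values in `[0, 1]`. -/
def cutoffKernel (p θ c : ℝ) (h : E) : ℝ := min 1 (c * ‖h‖) ^ p * ‖h‖ ^ θ

variable {p θ c : ℝ}

lemma cutoffKernel_nonneg (hc : 0 ≤ c) (h : E) : 0 ≤ cutoffKernel p θ c h := by
  have : 0 ≤ min 1 (c * ‖h‖) := le_min zero_le_one (by positivity)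
  unfold cutoffKernel
  positivity

lemma cutoffKernel_of_inv_le (hc : 0 < c) {h : E} (hh : c⁻¹ ≤ ‖h‖) :
    cutoffKernel p θ c h = ‖h‖ ^ θ := by
  rw [cutoffKernel, min_eq_left ((inv_le_iff_one_le_mul₀' hc).1 hh), Real.one_rpow, one_mul]

variable [NormedSpace ℝ E]

lemma cutoffKernel_eq_rpow_mul (hc : 0 < c) (h : E) :
    cutoffKernel p θ c h = c ^ (-θ) * cutoffKernel p θ 1 (c • h) := by
  rw [cutoffKernel, cutoffKernel, norm_smul, Real.norm_of_nonneg hc.le, one_mul,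
    Real.mul_rpow hc.le (norm_nonneg h), Real.rpow_neg hc.le]
  field_simp

variable [MeasurableSpace E] [BorelSpace E] [FiniteDimensional ℝ E]
  (μ : Measure E) [μ.IsAddHaarMeasure]

lemma integrable_cutoffKernel [Nontrivial E] (hp : 0 ≤ p) (hc : 0 < c)
    (hlow : -(Module.finrank ℝ E : ℝ) - p < θ) (hhigh : θ < -(Module.finrank ℝ E : ℝ)) :
    Integrable (cutoffKernel p θ c : E → ℝ) μ := by
  set d := Module.finrank ℝ E with hd
  have hd_sub : ((d - 1 : ℕ) : ℝ) = d - 1 := Nat.cast_pred Module.finrank_pos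
  refine (integrable_fun_norm_addHaar μ (f := fun t : ℝ => min 1 (c * t) ^ p * t ^ θ)).2 ?_
  have hmeas : Measurable fun t : ℝ => t ^ (d - 1) • (min 1 (c * t) ^ p * t ^ θ) := by fun_prop
  have hbound : ∀ (t C σ : ℝ), 0 < t → min 1 (c * t) ^ p ≤ C * t ^ σ →
      ‖t ^ (d - 1) • (min 1 (c * t) ^ p * t ^ θ)‖ ≤ C * t ^ (σ + θ + d - 1) := by
    intro t C σ ht hmin
    have : 0 ≤ min 1 (c * t) := le_min zero_le_one (by positivity)
    rw [smul_eq_mul, Real.norm_of_nonneg (by positivity)]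
    calc t ^ (d - 1) * (min 1 (c * t) ^ p * t ^ θ) ≤ t ^ (d - 1) * (C * t ^ σ * t ^ θ) := by gcongr
      _ = C * (t ^ ((d - 1 : ℕ) : ℝ) * t ^ σ * t ^ θ) := by
        rw [Real.rpow_natCast]
        ring
      _ = C * t ^ (σ + θ + d - 1) := by
        rw [← Real.rpow_add ht, ← Real.rpow_add ht, hd_sub]
        ring_nf
  rw [← hd, ← Ioc_union_Ioi_eq_Ioi (zero_le_one (α := ℝ))]
  refine IntegrableOn.union ?_ ?_
  · have hint : IntegrableOn (fun t : ℝ => c ^ p * t ^ (p + θ + d - 1)) (Ioc 0 1) :=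
      ((intervalIntegrable_iff_integrableOn_Ioc_of_le zero_le_one).1
        (intervalIntegral.intervalIntegrable_rpow' (by linarith))).const_mul _
    refine Integrable.mono' hint hmeas.aestronglyMeasurable ?_
    filter_upwards [ae_restrict_mem measurableSet_Ioc] with t ht
    refine hbound t _ p ht.1 ?_
    rw [← Real.mul_rpow hc.le ht.1.le]
    exact Real.rpow_le_rpow (le_min zero_le_one (mul_pos hc ht.1).le) (min_le_right _ _) hp
  · have hint : IntegrableOn (fun t : ℝ => 1 * t ^ (0 + θ + d - 1)) (Ioi 1) :=
      (integrableOn_Ioi_rpow_of_lt (by linarith) one_pos).const_mul _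
    refine Integrable.mono' hint hmeas.aestronglyMeasurable ?_
    filter_upwards [ae_restrict_mem measurableSet_Ioi] with t ht
    have ht0 : 0 < t := zero_lt_one.trans ht
    refine hbound t _ 0 ht0 ?_
    rw [Real.rpow_zero, mul_one]
    exact Real.rpow_le_one (le_min zero_le_one (mul_pos hc ht0).le) (min_le_left _ _) hp

lemma integrableOn_norm_sub_rpow_compl_ball [Nontrivial E]
    (hθ : θ < -(Module.finrank ℝ E : ℝ)) (x₀ : E) {R : ℝ} (hR : 0 < R) :
    IntegrableOn (fun y => ‖y - x₀‖ ^ θ) (ball x₀ R)ᶜ μ := by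
  have hker := (integrable_cutoffKernel μ (p := -(Module.finrank ℝ E : ℝ) - θ + 1)
    (by linarith) (inv_pos.2 hR) (by linarith) hθ).comp_sub_right x₀
  refine hker.integrableOn.congr ?_
  filter_upwards [ae_restrict_mem measurableSet_ball.compl] with y hy
  rw [mem_compl_iff, mem_ball_iff_norm, not_lt] at hy
  exact cutoffKernel_of_inv_le (inv_pos.2 hR) (by rwa [inv_inv])

lemma integral_cutoffKernel (hc : 0 < c) :
    ∫ h, cutoffKernel p θ c h ∂μ =
      c ^ (-(Module.finrank ℝ E : ℝ) - θ) * ∫ h, cutoffKernel p θ 1 h ∂μ := by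
  simp_rw [cutoffKernel_eq_rpow_mul hc]
  rw [integral_const_mul, Measure.integral_comp_smul, smul_eq_mul, abs_of_pos (by positivity),
    ← mul_assoc, ← Real.rpow_natCast, ← Real.rpow_neg hc.le, ← Real.rpow_add hc]
  ring_nf

lemma integrable_indicator_mul_comp_sub {κ : E → ℝ} (hκ : Integrable κ μ) {A : Set E}
    (hA : MeasurableSet A) (hμA : μ A ≠ ∞) :
    Integrable (fun z : E × E => A.indicator 1 z.2 * κ (z.1 - z.2)) (μ.prod μ) := by
  have hind : Integrable (A.indicator (1 : E → ℝ)) μ :=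
    (integrable_indicator_iff hA).2 (integrableOn_const hμA)
  simpa only [ContinuousLinearMap.mul_apply'] using
    hind.convolution_integrand (ContinuousLinearMap.mul ℝ ℝ) hκ

lemma integral_indicator_mul_comp_sub {κ : E → ℝ} (hκ : Integrable κ μ) {A : Set E}
    (hA : MeasurableSet A) (hμA : μ A ≠ ∞) :
    ∫ z : E × E, A.indicator 1 z.2 * κ (z.1 - z.2) ∂(μ.prod μ) = μ.real A * ∫ h, κ h ∂μ := by
  rw [integral_prod_symm _ (integrable_indicator_mul_comp_sub μ hκ hA hμA)]
  simp only [integral_const_mul, integral_sub_right_eq_self, integral_mul_const,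
    integral_indicator_one hA]

end CutoffKernel

section Poincare

lemma integral_norm_sub_average_rpow_le {α F : Type*} [MeasurableSpace α] [NormedAddCommGroup F]
    [NormedSpace ℝ F] [CompleteSpace F] {ν : Measure α} [IsFiniteMeasure ν] [NeZero ν] {p : ℝ}
    {v : α → F} (hp : 1 ≤ p) (hv : Integrable v ν)
    (hpair : Integrable (fun z : α × α => ‖v z.1 - v z.2‖ ^ p) (ν.prod ν)) :
    ∫ x, ‖v x - ⨍ y, v y ∂ν‖ ^ p ∂ν ≤
      (ν.real univ)⁻¹ * ∫ z, ‖v z.1 - v z.2‖ ^ p ∂(ν.prod ν) := by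
  have hconv : ConvexOn ℝ univ fun t : F => ‖t‖ ^ p :=
    ⟨convex_univ, fun x _ y _ a b ha hb hab =>
      (Real.rpow_le_rpow (norm_nonneg _) (convexOn_univ_norm.2 trivial trivial ha hb hab)
        (by linarith)).trans
      ((convexOn_rpow hp).2 (norm_nonneg x) (norm_nonneg y) ha hb hab)⟩
  have hjensen : ∀ᵐ x ∂ν, ‖v x - ⨍ y, v y ∂ν‖ ^ p ≤ ⨍ y, ‖v x - v y‖ ^ p ∂ν := by
    filter_upwards [hpair.prod_right_ae] with x hx
    have haverage : v x - ⨍ y, v y ∂ν = ⨍ y, (v x - v y) ∂ν := by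
      rw [average_eq, average_eq, integral_sub (integrable_const _) hv, integral_const, smul_sub,
        inv_smul_smul₀ measureReal_univ_ne_zero]
    rw [haverage]
    exact hconv.map_average_le
      (continuous_norm.rpow_const fun _ => Or.inr (by linarith)).continuousOn isClosed_univ
      (Eventually.of_forall fun _ => mem_univ _) ((integrable_const _).sub hv) hx
  calc ∫ x, ‖v x - ⨍ y, v y ∂ν‖ ^ p ∂ν ≤ ∫ x, ⨍ y, ‖v x - v y‖ ^ p ∂ν ∂ν := by
        refine integral_mono_of_nonneg (Eventually.of_forall fun x => by positivity) ?_ hjensen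
        simp only [average_eq]
        exact hpair.integral_prod_left.smul (ν.real univ)⁻¹
    _ = (ν.real univ)⁻¹ * ∫ z, ‖v z.1 - v z.2‖ ^ p ∂(ν.prod ν) := by
        simp only [average_eq, smul_eq_mul]
        rw [integral_const_mul, integral_prod _ hpair]

end Poincare

section Gagliardo

variable {n : ℕ} {p s : ℝ} {u v η : Rn n → ℝ} {x₀ : Rn n} {r : ℝ}

lemma gagliardoIntegrand_nonneg (z : Rn n × Rn n) : 0 ≤ gagliardoIntegrand n p s u z := by
  unfold gagliardoIntegrand
  positivity

lemma measurable_gagliardoIntegrand (hu : Measurable u) :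
    Measurable (gagliardoIntegrand n p s u) := by
  unfold gagliardoIntegrand
  fun_prop

lemma gagliardoIntegrand_self (hp : p ≠ 0) (x : Rn n) :
    gagliardoIntegrand n p s u (x, x) = 0 := by
  simp only [gagliardoIntegrand, sub_self, abs_zero, Real.zero_rpow hp, zero_mul]

lemma gagliardoIntegrand_le_of_abs_sub_le (hp : 0 ≤ p) {C : ℝ} (hC : 0 ≤ C) {z : Rn n × Rn n}
    (h : |v z.1 - v z.2| ≤ C * |u z.1 - u z.2|) :
    gagliardoIntegrand n p s v z ≤ C ^ p * gagliardoIntegrand n p s u z := by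
  unfold gagliardoIntegrand
  rw [← mul_assoc, ← Real.mul_rpow hC (abs_nonneg _)]
  gcongr

lemma abs_sub_rpow_le_gagliardoIntegrand (hp : 0 < p) (hs : 0 ≤ s) {z : Rn n × Rn n}
    (hz : z ∈ ball x₀ r ×ˢ ball x₀ r) :
    |v z.1 - v z.2| ^ p ≤ (2 * r) ^ ((n : ℝ) + p * s) * gagliardoIntegrand n p s v z := by
  obtain ⟨x, y⟩ := z
  rcases eq_or_ne x y with rfl | hxy
  · rw [gagliardoIntegrand_self hp.ne', sub_self, abs_zero, Real.zero_rpow hp.ne', mul_zero]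
  have hpos : 0 < ‖x - y‖ := norm_sub_pos_iff.2 hxy
  have hle : ‖x - y‖ ≤ 2 * r := by
    rw [← dist_eq_norm]
    linarith [dist_triangle_right x y x₀, mem_ball.1 hz.1, mem_ball.1 hz.2]
  have hkernel : 1 ≤ (2 * r) ^ ((n : ℝ) + p * s) * ‖x - y‖ ^ (-(n : ℝ) - p * s) := by
    have h := rpow_neg_le_mul_rpow_neg (b := 1) hpos (hpos.trans_le hle) (by rwa [mul_one])
      (by positivity : 0 ≤ (n : ℝ) + p * s)
    rwa [Real.one_rpow, neg_add'] at h
  calc |v x - v y| ^ p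
      ≤ |v x - v y| ^ p * ((2 * r) ^ ((n : ℝ) + p * s) * ‖x - y‖ ^ (-(n : ℝ) - p * s)) :=
        le_mul_of_one_le_right (by positivity) hkernel
    _ = _ := mul_left_comm _ _ _

lemma setAverage_abs_sub_average_rpow_le (hp : 1 ≤ p) (hs : 0 ≤ s) (hr : 0 < r)
    (hv : IntegrableOn v (ball x₀ r))
    (hgag : IntegrableOn (gagliardoIntegrand n p s v) (ball x₀ r ×ˢ ball x₀ r)) :
    ⨍ x in ball x₀ r, |v x - ⨍ y in ball x₀ r, v y| ^ p ≤
      (volume.real (ball x₀ r) ^ 2)⁻¹ * (2 * r) ^ ((n : ℝ) + p * s) *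
        ∫ z in ball x₀ r ×ˢ ball x₀ r, gagliardoIntegrand n p s v z := by
  set ν := volume.restrict (ball x₀ r)
  have : NeZero ν := ⟨by
    simpa only [ν, ne_eq, Measure.restrict_eq_zero] using (measure_ball_pos volume x₀ hr).ne'⟩
  have : IsFiniteMeasure ν := isFiniteMeasure_restrict.2 measure_ball_lt_top.ne
  have hν : ν.real univ = volume.real (ball x₀ r) := measureReal_restrict_apply_univ _
  have hprod : volume.restrict (ball x₀ r ×ˢ ball x₀ r) = ν.prod ν := by
    rw [Measure.volume_eq_prod, ← Measure.prod_restrict]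
  have hle : ∀ᵐ z ∂(ν.prod ν), |v z.1 - v z.2| ^ p ≤
      (2 * r) ^ ((n : ℝ) + p * s) * gagliardoIntegrand n p s v z := by
    rw [← hprod]
    filter_upwards [ae_restrict_mem (measurableSet_ball.prod measurableSet_ball)] with z hz
    exact abs_sub_rpow_le_gagliardoIntegrand (by linarith) hs hz
  rw [IntegrableOn, hprod] at hgag
  have hpair : Integrable (fun z : Rn n × Rn n => |v z.1 - v z.2| ^ p) (ν.prod ν) := by
    refine (hgag.const_mul ((2 * r) ^ ((n : ℝ) + p * s))).mono' ?_ (hle.mono fun z hz => ?_)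
    · exact ((hv.1.comp_fst.sub hv.1.comp_snd).norm.aemeasurable.pow_const p).aestronglyMeasurable
    · rwa [Real.norm_of_nonneg (by positivity)]
  rw [average_eq, smul_eq_mul, hν, hprod]
  calc (volume.real (ball x₀ r))⁻¹ * ∫ x, |v x - ⨍ y, v y ∂ν| ^ p ∂ν
      ≤ (volume.real (ball x₀ r))⁻¹ * ((volume.real (ball x₀ r))⁻¹ *
          ∫ z, |v z.1 - v z.2| ^ p ∂(ν.prod ν)) := by
        rw [← hν]
        gcongr
        exact integral_norm_sub_average_rpow_le hp hv hpair
    _ ≤ (volume.real (ball x₀ r))⁻¹ * ((volume.real (ball x₀ r))⁻¹ *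
          ((2 * r) ^ ((n : ℝ) + p * s) * ∫ z, gagliardoIntegrand n p s v z ∂(ν.prod ν))) := by
        gcongr
        exact (integral_mono_ae hpair (hgag.const_mul _) hle).trans_eq (integral_const_mul _ _)
    _ = _ := by
        rw [sq, mul_inv]
        ring

/-- The mass of the kernel `min (1, ‖h‖) ^ p * ‖h‖ ^ (-n - ps)`, which controls the Gagliardo
energy of cutoff functions. -/
def cutoffMass (n : ℕ) (p s : ℝ) : ℝ := ∫ h : Rn n, cutoffKernel p (-(n : ℝ) - p * s) 1 h

lemma cutoffMass_nonneg : 0 ≤ cutoffMass n p s :=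
  integral_nonneg (cutoffKernel_nonneg zero_le_one)

variable {S T : Set (Rn n)} {c : ℝ}

lemma IsCutoff.gagliardoIntegrand_le (hη : IsCutoff η S T c) (hp : 0 < p) (hc : 0 ≤ c)
    (z : Rn n × Rn n) :
    gagliardoIntegrand n p s η z ≤
      T.indicator 1 z.2 * cutoffKernel p (-(n : ℝ) - p * s) c (z.1 - z.2) +
        T.indicator 1 z.1 * cutoffKernel p (-(n : ℝ) - p * s) c (z.2 - z.1) := by
  obtain ⟨x, y⟩ := z
  have hκ := cutoffKernel_nonneg (p := p) (θ := -(n : ℝ) - p * s) hc (x - y)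
  have hle : gagliardoIntegrand n p s η (x, y) ≤ cutoffKernel p (-(n : ℝ) - p * s) c (x - y) := by
    unfold gagliardoIntegrand cutoffKernel
    gcongr
    exact le_min (hη.abs_sub_le_one x y) ((hη.abs_sub_le x y).trans_eq (by rw [dist_eq_norm]))
  have hsymm : cutoffKernel p (-(n : ℝ) - p * s) c (y - x) =
      cutoffKernel p (-(n : ℝ) - p * s) c (x - y) := by
    rw [cutoffKernel, cutoffKernel, norm_sub_rev]
  rw [hsymm]
  by_cases hx : x ∈ T <;> by_cases hy : y ∈ T
  all_goals simp only [hx, hy, indicator_of_mem, indicator_of_notMem, not_false_iff, Pi.one_apply,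
    one_mul, zero_mul]
  · linarith
  · linarith
  · linarith
  · simp only [gagliardoIntegrand, hη.eq_zero x hx, hη.eq_zero y hy, sub_self, abs_zero,
      Real.zero_rpow hp.ne', zero_mul, add_zero, le_refl]

variable [NeZero n]

lemma integrable_cutoffKernel_gagliardo (hp : 0 < p) (hs : 0 < s) (hs1 : s < 1) (hc : 0 < c) :
    Integrable (cutoffKernel p (-(n : ℝ) - p * s) c : Rn n → ℝ) := by
  have hps : 0 < p * s := mul_pos hp hs
  have hps' : p * s < p := mul_lt_of_lt_one_right hp hs1
  exact integrable_cutoffKernel volume hp.le hc (by rw [finrank_euclideanSpace_fin]; linarith)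
    (by rw [finrank_euclideanSpace_fin]; linarith)

lemma IsCutoff.integrable_gagliardoIntegrand (hη : IsCutoff η S T c) (hT : MeasurableSet T)
    (hT' : volume T ≠ ∞) (hp : 0 < p) (hs : 0 < s) (hs1 : s < 1) (hc : 0 < c) :
    Integrable (gagliardoIntegrand n p s η) := by
  have hint := integrable_indicator_mul_comp_sub volume
    (integrable_cutoffKernel_gagliardo hp hs hs1 hc) hT hT'
  refine (hint.add hint.swap).mono'
    (measurable_gagliardoIntegrand hη.measurable).aestronglyMeasurable
    (Eventually.of_forall fun z => ?_)
  rw [Real.norm_of_nonneg (gagliardoIntegrand_nonneg z)]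
  exact hη.gagliardoIntegrand_le hp hc.le z

lemma IsCutoff.integral_gagliardoIntegrand_le (hη : IsCutoff η S T c) (hT : MeasurableSet T)
    (hT' : volume T ≠ ∞) (hp : 0 < p) (hs : 0 < s) (hs1 : s < 1) (hc : 0 < c) :
    ∫ z, gagliardoIntegrand n p s η z ≤
      2 * (volume.real T * (c ^ (p * s) * cutoffMass n p s)) := by
  have hκ := integrable_cutoffKernel_gagliardo (n := n) hp hs hs1 hc
  have hint := integrable_indicator_mul_comp_sub volume hκ hT hT'
  set F : Rn n × Rn n → ℝ := fun z =>
    T.indicator 1 z.2 * cutoffKernel p (-(n : ℝ) - p * s) c (z.1 - z.2)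
  calc ∫ z, gagliardoIntegrand n p s η z ≤ ∫ z, (F z + F z.swap) :=
        integral_mono (hη.integrable_gagliardoIntegrand hT hT' hp hs hs1 hc)
          (hint.add hint.swap) (hη.gagliardoIntegrand_le hp hc.le)
    _ = (∫ z, F z) + ∫ z : Rn n × Rn n, F z.swap := integral_add hint hint.swap
    _ = 2 * ∫ z, F z := by
        rw [Measure.volume_eq_prod, integral_prod_swap F, two_mul]
    _ = 2 * (volume.real T * (c ^ (p * s) * cutoffMass n p s)) := by
        rw [Measure.volume_eq_prod, integral_indicator_mul_comp_sub volume hκ hT hT',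
          integral_cutoffKernel volume hc, cutoffMass, finrank_euclideanSpace_fin]
        ring_nf

end Gagliardo

section Nonlocal

variable {n : ℕ} {p s lam Lam : ℝ} {K u φ : Rn n → ℝ} {Ω : Set (Rn n)} {x₀ : Rn n} {r R : ℝ}

lemma cnps_pos (hp : 0 < p) (hs1 : s < 1) : 0 < cnps n p s := by
  have : 0 < 1 - s := sub_pos.2 hs1
  have : 0 < Real.Gamma (((n : ℝ) + p) / 2) := Real.Gamma_pos_of_pos (by positivity)
  have : 0 < Real.Gamma ((p + 1) / 2) := Real.Gamma_pos_of_pos (by positivity)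
  unfold cnps
  positivity

lemma integrable_pairing (hp : 1 < p) (hs1 : s < 1) (hlam : 0 ≤ lam)
    (hK : KernelClass n p s lam Lam K) (hu : MemX n p s Ω u) (hφ : MemX n p s Ω φ)
    (hφ0 : ∀ x ∉ Ω, φ x = 0) :
    Integrable fun z : Rn n × Rn n => Hp p (u z.1 - u z.2) * (φ z.1 - φ z.2) * K (z.1 - z.2) := by
  obtain ⟨hum, -, hug⟩ := hu
  obtain ⟨hφm, -, hφg⟩ := hφ
  obtain ⟨hKm, -, hKbound⟩ := hK
  have hc : 0 < cnps n p s := cnps_pos (by linarith) hs1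
  refine (integrableOn_iff_integrable_of_support_subset fun z hz => ?_).1
    (((hug.add hφg).const_mul (cnps n p s * Lam)).mono'
      (((measurable_Hp.comp (by fun_prop : Measurable fun z : Rn n × Rn n => u z.1 - u z.2)).mul
        (by fun_prop)).mul (by fun_prop)).aestronglyMeasurable
      (Eventually.of_forall fun z => ?_))
  · by_contra hzΩ
    obtain ⟨h₁, h₂⟩ := not_or.1 hzΩ
    exact hz (by simp only [hφ0 _ h₁, hφ0 _ h₂, sub_self, mul_zero, zero_mul])
  obtain ⟨x, y⟩ := z
  rcases eq_or_ne x y with rfl | hxy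
  · simp only [sub_self, mul_zero, zero_mul, norm_zero, Pi.add_apply,
      gagliardoIntegrand_self (zero_lt_one.trans hp).ne', add_zero, le_refl]
  obtain ⟨hKlow, hKup⟩ := hKbound (x - y) (sub_ne_zero.2 hxy)
  have hK0 : 0 ≤ K (x - y) := (by positivity : (0 : ℝ) ≤ _).trans hKlow
  calc ‖Hp p (u x - u y) * (φ x - φ y) * K (x - y)‖
      = |u x - u y| ^ (p - 1) * |φ x - φ y| * K (x - y) := by
        rw [norm_mul, norm_mul, Real.norm_eq_abs, Real.norm_eq_abs, abs_Hp hp.ne',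
          Real.norm_of_nonneg hK0]
    _ ≤ (|u x - u y| ^ p + |φ x - φ y| ^ p) *
          (cnps n p s * Lam * ‖x - y‖ ^ (-(n : ℝ) - p * s)) := by
        gcongr
        exact rpow_sub_one_mul_le_add hp.le (abs_nonneg _) (abs_nonneg _)
    _ = cnps n p s * Lam * (gagliardoIntegrand n p s u (x, y) +
          gagliardoIntegrand n p s φ (x, y)) := by
        unfold gagliardoIntegrand
        ring

lemma exists_mem_ball_integrable_gagliardoIntegrand (hu : MemX n p s Ω u) (hr : 0 < r)
    (hΩ : ball x₀ r ⊆ Ω) :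
    ∃ x ∈ ball x₀ r, Integrable fun y => gagliardoIntegrand n p s u (x, y) := by
  have hint : IntegrableOn (gagliardoIntegrand n p s u) (ball x₀ r ×ˢ univ) :=
    hu.2.2.mono_set fun z hz => Or.inl (hΩ hz.1)
  rw [IntegrableOn, Measure.volume_eq_prod, ← Measure.prod_restrict, Measure.restrict_univ] at hint
  have : NeBot (ae (volume.restrict (ball x₀ r))) := ae_neBot.2 <| by
    simpa only [ne_eq, Measure.restrict_eq_zero] using (measure_ball_pos volume x₀ hr).ne'
  obtain ⟨x, hx, hxr⟩ := (hint.prod_right_ae.and (ae_restrict_mem measurableSet_ball)).exists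
  exact ⟨x, hxr, hx⟩

/-- The density of the tail `𝒯_R(u; x₀)` of `u`, whose integral over the complement of
`ball x₀ R` enters `tail n p s u x₀ R`. -/
def tailDensity (n : ℕ) (p s : ℝ) (u : Rn n → ℝ) (x₀ y : Rn n) : ℝ :=
  |u y| ^ (p - 1) * ‖y - x₀‖ ^ (-(n : ℝ) - p * s)

lemma tailDensity_nonneg (y : Rn n) : 0 ≤ tailDensity n p s u x₀ y := by
  unfold tailDensity
  positivity

lemma measurable_tailDensity (hu : Measurable u) : Measurable (tailDensity n p s u x₀) := by
  unfold tailDensity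
  fun_prop

lemma tailDensity_le (hp : 1 ≤ p) (hs : 0 ≤ s) (hR : 0 < R) {x y : Rn n}
    (hx : x ∈ ball x₀ (R / 2)) (hy : y ∉ ball x₀ R) :
    tailDensity n p s u x₀ y ≤
      (1 + 2 ^ p * |u x| ^ p) * ‖y - x₀‖ ^ (-(n : ℝ) - p * s) +
        2 ^ p * 2 ^ ((n : ℝ) + p * s) * gagliardoIntegrand n p s u (x, y) := by
  rw [mem_ball_iff_norm] at hx
  rw [mem_ball_iff_norm, not_lt] at hy
  have hpow : |u y| ^ (p - 1) ≤ 1 + 2 ^ p * (|u x| ^ p + |u x - u y| ^ p) :=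
    calc |u y| ^ (p - 1) = |u y| ^ (p - 1) * 1 := (mul_one _).symm
      _ ≤ |u y| ^ p + 1 ^ p := rpow_sub_one_mul_le_add hp (abs_nonneg _) zero_le_one
      _ ≤ 1 + (|u x| + |u x - u y|) ^ p := by
        rw [Real.one_rpow, add_comm, abs_sub_comm]
        gcongr
        linarith [abs_sub_abs_le_abs_sub (u y) (u x)]
      _ ≤ _ := by
        gcongr
        exact add_rpow_le_two_rpow_mul (by linarith) (abs_nonneg _) (abs_nonneg _)
  have hnorm : |‖x - x₀‖ - ‖y - x₀‖| ≤ ‖x - y‖ := by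
    simpa only [sub_sub_sub_cancel_right] using abs_norm_sub_norm_le (x - x₀) (y - x₀)
  have hkernel : ‖y - x₀‖ ^ (-(n : ℝ) - p * s) ≤
      2 ^ ((n : ℝ) + p * s) * ‖x - y‖ ^ (-(n : ℝ) - p * s) := by
    have hxy : ‖x - y‖ ≤ ‖x - x₀‖ + ‖y - x₀‖ := by
      simpa only [sub_sub_sub_cancel_right] using norm_sub_le (x - x₀) (y - x₀)
    rw [← neg_add']
    exact rpow_neg_le_mul_rpow_neg (by linarith [neg_abs_le (‖x - x₀‖ - ‖y - x₀‖)]) two_pos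
      (by linarith) (by positivity)
  calc tailDensity n p s u x₀ y
      ≤ (1 + 2 ^ p * (|u x| ^ p + |u x - u y| ^ p)) * ‖y - x₀‖ ^ (-(n : ℝ) - p * s) := by
        unfold tailDensity
        gcongr
    _ = (1 + 2 ^ p * |u x| ^ p) * ‖y - x₀‖ ^ (-(n : ℝ) - p * s) +
          2 ^ p * |u x - u y| ^ p * ‖y - x₀‖ ^ (-(n : ℝ) - p * s) := by ring
    _ ≤ (1 + 2 ^ p * |u x| ^ p) * ‖y - x₀‖ ^ (-(n : ℝ) - p * s) +
          2 ^ p * |u x - u y| ^ p * (2 ^ ((n : ℝ) + p * s) * ‖x - y‖ ^ (-(n : ℝ) - p * s)) := by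
        gcongr
    _ = _ := by
        unfold gagliardoIntegrand
        ring

lemma integrableOn_tailDensity [NeZero n] (hp : 1 ≤ p) (hs : 0 < s) (hR : 0 < R)
    (hΩ : ball x₀ R ⊆ Ω) (hu : MemX n p s Ω u) :
    IntegrableOn (tailDensity n p s u x₀) (ball x₀ R)ᶜ := by
  obtain ⟨x, hxR, hx⟩ := exists_mem_ball_integrable_gagliardoIntegrand hu (half_pos hR)
    ((ball_subset_ball (half_le_self hR.le)).trans hΩ)
  have hps : 0 < p * s := mul_pos (by linarith) hs
  have hkernel : IntegrableOn (fun y => ‖y - x₀‖ ^ (-(n : ℝ) - p * s)) (ball x₀ R)ᶜ :=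
    integrableOn_norm_sub_rpow_compl_ball volume
      (by rw [finrank_euclideanSpace_fin]; linarith) x₀ hR
  refine ((hkernel.const_mul (1 + 2 ^ p * |u x| ^ p)).add
    (hx.integrableOn.const_mul (2 ^ p * 2 ^ ((n : ℝ) + p * s)))).mono'
    (measurable_tailDensity hu.1).aestronglyMeasurable ?_
  filter_upwards [ae_restrict_mem measurableSet_ball.compl] with y hy
  rw [Real.norm_of_nonneg (tailDensity_nonneg y)]
  exact tailDensity_le hp hs.le hR hxR hy

lemma measurable_minusPart (hu : Measurable u) : Measurable (minusPart u) :=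
  hu.neg.max measurable_const

lemma minusPart_nonneg (x : Rn n) : 0 ≤ minusPart u x := le_max_right _ _

lemma abs_minusPart_le (x : Rn n) : |minusPart u x| ≤ |u x| := by
  rw [abs_of_nonneg (minusPart_nonneg x)]
  exact max_le (neg_le_abs _) (abs_nonneg _)

lemma integrableOn_tailDensity_minusPart [NeZero n] (hp : 1 ≤ p) (hs : 0 < s) (hR : 0 < R)
    (hΩ : ball x₀ R ⊆ Ω) (hu : MemX n p s Ω u) :
    IntegrableOn (tailDensity n p s (minusPart u) x₀) (ball x₀ R)ᶜ := by
  refine (integrableOn_tailDensity hp hs hR hΩ hu).mono'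
    (measurable_tailDensity (measurable_minusPart hu.1)).aestronglyMeasurable
    (Eventually.of_forall fun y => ?_)
  rw [Real.norm_of_nonneg (tailDensity_nonneg y)]
  exact mul_le_mul_of_nonneg_right
    (Real.rpow_le_rpow (abs_nonneg _) (abs_minusPart_le y) (sub_nonneg.2 hp)) (by positivity)

end Nonlocal

section TestFunction

variable {n : ℕ} {p s b c : ℝ} {u η : Rn n → ℝ} {S T Ω : Set (Rn n)} {x y : Rn n}

/-- The logarithmic test function `η ^ p * (u + b) ^ (1 - p)` built from a cutoff function `η`.
The modulus only matters where `u < 0`, which is away from the support of `η`; it keeps the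
base positive everywhere. -/
def logTest (p b : ℝ) (u η : Rn n → ℝ) (x : Rn n) : ℝ := η x ^ p * (|u x| + b) ^ (1 - p)

lemma logTest_nonneg (hb : 0 ≤ b) (hη : 0 ≤ η x) : 0 ≤ logTest p b u η x := by
  unfold logTest
  positivity

lemma logTest_eq_zero (hp : p ≠ 0) (hη : η x = 0) : logTest p b u η x = 0 := by
  rw [logTest, hη, Real.zero_rpow hp, zero_mul]

lemma abs_add_rpow_one_sub_le (hp : 1 ≤ p) (hb : 0 < b) (t : ℝ) :
    (|t| + b) ^ (1 - p) ≤ b ^ (1 - p) :=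
  Real.rpow_le_rpow_of_nonpos hb (le_add_of_nonneg_left (abs_nonneg t)) (sub_nonpos.2 hp)

lemma logTest_le (hp : 1 ≤ p) (hb : 0 < b) (hη : η x ∈ Icc 0 1) :
    logTest p b u η x ≤ b ^ (1 - p) :=
  (mul_le_of_le_one_left (by positivity) (Real.rpow_le_one hη.1 hη.2 (by linarith))).trans
    (abs_add_rpow_one_sub_le hp hb _)

lemma measurable_logTest (hu : Measurable u) (hη : Measurable η) :
    Measurable (logTest p b u η) := by
  unfold logTest
  fun_prop

lemma abs_logTest_sub_le (hp : 1 ≤ p) (hb : 0 < b) (hx : η x ∈ Icc 0 1) (hy : η y ∈ Icc 0 1) :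
    |logTest p b u η x - logTest p b u η y| ≤
      (p - 1) * b ^ (-p) * |u x - u y| + p * b ^ (1 - p) * |η x - η y| := by
  have := sub_nonneg.2 hp
  have hbase : |(|u x| + b) ^ (1 - p) - (|u y| + b) ^ (1 - p)| ≤
      (p - 1) * b ^ (-p) * |u x - u y| := by
    refine (abs_rpow_one_sub_sub_le hp hb (le_add_of_nonneg_left (abs_nonneg (u x)))
      (le_add_of_nonneg_left (abs_nonneg (u y)))).trans ?_
    rw [add_sub_add_right_eq_sub]
    exact mul_le_mul_of_nonneg_left (abs_abs_sub_abs_le _ _) (by positivity)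
  calc |logTest p b u η x - logTest p b u η y|
      = |η x ^ p * ((|u x| + b) ^ (1 - p) - (|u y| + b) ^ (1 - p)) +
          (η x ^ p - η y ^ p) * (|u y| + b) ^ (1 - p)| := by
        unfold logTest
        ring_nf
    _ ≤ |η x ^ p * ((|u x| + b) ^ (1 - p) - (|u y| + b) ^ (1 - p))| +
          |(η x ^ p - η y ^ p) * (|u y| + b) ^ (1 - p)| := abs_add_le _ _
    _ = η x ^ p * |(|u x| + b) ^ (1 - p) - (|u y| + b) ^ (1 - p)| +
          |η x ^ p - η y ^ p| * (|u y| + b) ^ (1 - p) := by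
        rw [abs_mul, abs_mul, abs_of_nonneg (Real.rpow_nonneg hx.1 p),
          abs_of_nonneg (by positivity : 0 ≤ (|u y| + b) ^ (1 - p))]
    _ ≤ 1 * ((p - 1) * b ^ (-p) * |u x - u y|) + p * |η x - η y| * b ^ (1 - p) :=
        add_le_add
          (mul_le_mul (Real.rpow_le_one hx.1 hx.2 (by linarith)) hbase (abs_nonneg _) zero_le_one)
          (mul_le_mul (abs_rpow_sub_rpow_le hp hx hy) (abs_add_rpow_one_sub_le hp hb _)
            (by positivity) (by positivity))
    _ = _ := by ring

lemma gagliardoIntegrand_logTest_le (hp : 1 ≤ p) (hb : 0 < b) (hη : ∀ x, η x ∈ Icc 0 1)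
    (z : Rn n × Rn n) :
    gagliardoIntegrand n p s (logTest p b u η) z ≤
      2 ^ p * (((p - 1) * b ^ (-p)) ^ p * gagliardoIntegrand n p s u z +
        (p * b ^ (1 - p)) ^ p * gagliardoIntegrand n p s η z) := by
  have := sub_nonneg.2 hp
  unfold gagliardoIntegrand
  calc |logTest p b u η z.1 - logTest p b u η z.2| ^ p * ‖z.1 - z.2‖ ^ (-(n : ℝ) - p * s)
      ≤ ((p - 1) * b ^ (-p) * |u z.1 - u z.2| + p * b ^ (1 - p) * |η z.1 - η z.2|) ^ p *
          ‖z.1 - z.2‖ ^ (-(n : ℝ) - p * s) := by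
        gcongr
        exact abs_logTest_sub_le hp hb (hη _) (hη _)
    _ ≤ 2 ^ p * (((p - 1) * b ^ (-p) * |u z.1 - u z.2|) ^ p +
          (p * b ^ (1 - p) * |η z.1 - η z.2|) ^ p) * ‖z.1 - z.2‖ ^ (-(n : ℝ) - p * s) := by
        gcongr
        exact add_rpow_le_two_rpow_mul (by linarith) (by positivity) (by positivity)
    _ = _ := by
        rw [Real.mul_rpow (x := (p - 1) * b ^ (-p)) (by positivity) (abs_nonneg _),
          Real.mul_rpow (x := p * b ^ (1 - p)) (by positivity) (abs_nonneg _)]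
        ring

lemma IsCutoff.integrable_logTest_rpow_mul (hη : IsCutoff η S T c)
    (hp : 1 ≤ p) (hb : 0 < b) (hu : Measurable u) {W : Rn n → ℝ} (hW : ∀ x, 0 ≤ W x)
    (hWT : IntegrableOn W T) : Integrable fun x => |logTest p b u η x| ^ p * W x := by
  have hp0 : p ≠ 0 := by linarith
  refine (integrableOn_iff_integrable_of_support_subset fun x hx => ?_).1
    ((hWT.const_mul ((b ^ (1 - p)) ^ p)).mono'
      (((measurable_logTest hu hη.measurable).abs.pow_const p).aestronglyMeasurable.mul hWT.1)
      (Eventually.of_forall fun x => ?_))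
  · by_contra hxT
    exact hx (by simp only [logTest_eq_zero hp0 (hη.eq_zero x hxT), abs_zero, Real.zero_rpow hp0,
      zero_mul])
  · have hφ := logTest_nonneg (p := p) (u := u) hb.le (hη.nonneg x)
    rw [abs_of_nonneg hφ, Real.norm_of_nonneg (mul_nonneg (by positivity) (hW x))]
    exact mul_le_mul_of_nonneg_right
      (Real.rpow_le_rpow hφ (logTest_le hp hb (hη.mem_Icc x)) (by linarith)) (hW x)

lemma IsCutoff.memX_logTest [NeZero n] (hη : IsCutoff η S T c) (hT : MeasurableSet T)
    (hT' : volume T ≠ ∞) (hp : 1 ≤ p) (hs : 0 < s) (hs1 : s < 1) (hc : 0 < c) (hb : 0 < b)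
    (hu : MemX n p s Ω u) : MemX n p s Ω (logTest p b u η) := by
  have hmeas := measurable_logTest (p := p) (b := b) hu.1 hη.measurable
  refine ⟨hmeas, ?_, ?_⟩
  · simpa only [mul_one] using (hη.integrable_logTest_rpow_mul hp hb hu.1
      (fun _ => zero_le_one) (integrableOn_const hT')).integrableOn
  · have hηgag := (hη.integrable_gagliardoIntegrand (p := p) (s := s) hT hT' (by linarith) hs hs1
      hc).integrableOn (s := R2n n Ω)
    refine (((hu.2.2.const_mul (((p - 1) * b ^ (-p)) ^ p)).add
      (hηgag.const_mul ((p * b ^ (1 - p)) ^ p))).const_mul (2 ^ p)).mono'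
      (measurable_gagliardoIntegrand hmeas).aestronglyMeasurable (Eventually.of_forall fun z => ?_)
    rw [Real.norm_of_nonneg (gagliardoIntegrand_nonneg z)]
    exact gagliardoIntegrand_logTest_le hp hb hη.mem_Icc z

end TestFunction

section TruncatedLogarithm

variable {n : ℕ} {p s a b d : ℝ} {u : Rn n → ℝ} {S : Set (Rn n)} {x y : Rn n}

/-- The truncated logarithm `min (max (log ((a + b) / (u + b))) 0) d`, written `v̄` in the paper. -/
def truncLog (a b d : ℝ) (u : Rn n → ℝ) (x : Rn n) : ℝ :=
  min (max (Real.log ((a + b) / (u x + b))) 0) d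

lemma measurable_truncLog (hu : Measurable u) : Measurable (truncLog a b d u) := by
  unfold truncLog
  fun_prop

lemma abs_truncLog_le : |truncLog a b d u x| ≤ |d| := by
  have h := le_max_right (Real.log ((a + b) / (u x + b))) 0
  refine abs_le.2 ⟨le_min ?_ (neg_abs_le d), (min_le_right _ _).trans (le_abs_self d)⟩
  linarith [abs_nonneg d]

lemma abs_truncLog_sub_le (ha : 0 < a) (hb : 0 < b) (hx : 0 ≤ u x) (hy : 0 ≤ u y) :
    |truncLog a b d u x - truncLog a b d u y| ≤ |Real.log (u x + b) - Real.log (u y + b)| := by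
  set f : Rn n → ℝ := fun x => Real.log ((a + b) / (u x + b))
  calc |truncLog a b d u x - truncLog a b d u y| ≤ |max (f x) 0 - max (f y) 0| := by
        refine (abs_min_sub_min_le_max _ d _ d).trans_eq ?_
        rw [sub_self, abs_zero, max_eq_left (abs_nonneg _)]
    _ ≤ |f x - f y| := abs_max_sub_max_le_abs _ _ _
    _ = |Real.log (u x + b) - Real.log (u y + b)| := by
        simp only [f]
        rw [Real.log_div (by positivity) (by positivity),
          Real.log_div (by positivity) (by positivity), _root_.sub_sub_sub_cancel_left,
          abs_sub_comm]

lemma integrableOn_truncLog (hS : volume S ≠ ∞) (hu : Measurable u) :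
    IntegrableOn (truncLog a b d u) S :=
  (integrableOn_const (C := |d|) hS).mono' (measurable_truncLog hu).aestronglyMeasurable
    (Eventually.of_forall fun _ => abs_truncLog_le)

lemma integrableOn_gagliardoIntegrand_truncLog (hp : 0 ≤ p) (ha : 0 < a) (hb : 0 < b)
    (hS : MeasurableSet S) (hu : Measurable u) (hu0 : ∀ x ∈ S, 0 ≤ u x)
    (hgag : IntegrableOn (gagliardoIntegrand n p s u) (S ×ˢ S)) :
    IntegrableOn (gagliardoIntegrand n p s (truncLog a b d u)) (S ×ˢ S) := by
  refine (hgag.const_mul (b⁻¹ ^ p)).mono'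
    (measurable_gagliardoIntegrand (measurable_truncLog hu)).aestronglyMeasurable ?_
  filter_upwards [ae_restrict_mem (hS.prod hS)] with z hz
  have hx := hu0 z.1 hz.1
  have hy := hu0 z.2 hz.2
  rw [Real.norm_of_nonneg (gagliardoIntegrand_nonneg z)]
  refine gagliardoIntegrand_le_of_abs_sub_le hp (by positivity)
    ((abs_truncLog_sub_le ha hb hx hy).trans ?_)
  simpa only [add_sub_add_right_eq_sub] using
    abs_log_sub_log_le hb (le_add_of_nonneg_left hx) (le_add_of_nonneg_left hy)

end TruncatedLogarithm

section PointwiseEnergy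

variable {n : ℕ} {p s a b c d t R lam Lam : ℝ} {K u η : Rn n → ℝ} {S T : Set (Rn n)}
  {x₀ : Rn n}

lemma logTest_of_nonneg {x : Rn n} (hx : 0 ≤ u x) :
    logTest p b u η x = η x ^ p * (u x + b) ^ (1 - p) := by
  rw [logTest, abs_of_nonneg hx]

lemma IsCutoff.Hp_sub_mul_logTest_sub_le (hη : IsCutoff η S T c) (hp : 1 < p) (hb : 0 < b)
    (hu : ∀ x ∈ T, 0 ≤ u x) (x y : Rn n) :
    Hp p (u x - u y) * (logTest p b u η x - logTest p b u η y) ≤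
      2 ^ (p - 1) * (|η x - η y| ^ p +
        b ^ (1 - p) * (minusPart u y ^ (p - 1) * η x ^ p + minusPart u x ^ (p - 1) * η y ^ p)) := by
  wlog hyx : u y ≤ u x generalizing x y
  · have h := this y x (le_of_not_ge hyx)
    rw [← neg_sub (u x), Hp_neg, abs_sub_comm] at h
    linarith
  have hp0 : p ≠ 0 := by linarith
  have hηx := hη.nonneg x
  have hηy := hη.nonneg y
  have hmx := minusPart_nonneg (u := u) x
  have hmy := minusPart_nonneg (u := u) y
  rcases le_or_gt 0 (u y) with hy | hy
  · have hx : 0 ≤ u x := hy.trans hyx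
    rw [logTest_of_nonneg hx, logTest_of_nonneg hy, ← add_sub_add_right_eq_sub (u x) (u y) b]
    refine (Hp_sub_mul_rpow_mul_sub_le hp (by linarith) (by linarith) hηx hηy).trans ?_
    exact (le_add_of_nonneg_right (by positivity)).trans
      (le_mul_of_one_le_left (by positivity) (Real.one_le_rpow one_le_two (by linarith)))
  have hηy0 : η y = 0 := hη.eq_zero y fun hyT => (hu y hyT).not_gt hy
  rw [logTest_eq_zero hp0 hηy0]
  rcases le_or_gt 0 (u x) with hx | hx
  · rw [hηy0, sub_zero, sub_zero, abs_of_nonneg hηx, Real.zero_rpow hp0, mul_zero, add_zero,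
      logTest_of_nonneg hx]
    exact Hp_sub_mul_rpow_mul_le hp hx hb hηx
  · have hηx0 : η x = 0 := hη.eq_zero x fun hxT => (hu x hxT).not_gt hx
    rw [logTest_eq_zero hp0 hηx0, sub_self, mul_zero]
    positivity

lemma IsCutoff.Hp_sub_mul_logTest_sub_le_truncLog (hη : IsCutoff η S T c) (hp : 1 < p)
    (ha : 0 < a) (hb : 0 < b) {x y : Rn n} (hxS : x ∈ S) (hyS : y ∈ S) (hx : 0 ≤ u x)
    (hy : 0 ≤ u y) :
    Hp p (u x - u y) * (logTest p b u η x - logTest p b u η y) ≤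
      -((p - 1) * |truncLog a b d u x - truncLog a b d u y| ^ p) := by
  rw [logTest_of_nonneg hx, logTest_of_nonneg hy, hη.eq_one x hxS, hη.eq_one y hyS, Real.one_rpow,
    one_mul, one_mul, ← add_sub_add_right_eq_sub (u x) (u y) b]
  refine (Hp_sub_mul_rpow_sub_le_log hp (by linarith) (by linarith)).trans (neg_le_neg ?_)
  have : 0 ≤ p - 1 := by linarith
  gcongr ?_ * ?_ ^ p
  exact abs_truncLog_sub_le ha hb hx hy

/-- The symmetrized product of the indicator of `ball x₀ t` with the tail density of the negative
part of `u` outside `ball x₀ R`; it dominates the interaction of a test function supported in the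
small ball with the values of `u` outside the large one. -/
def tailInteraction (n : ℕ) (p s t R : ℝ) (u : Rn n → ℝ) (x₀ : Rn n) (z : Rn n × Rn n) : ℝ :=
  (ball x₀ t).indicator 1 z.1 * (ball x₀ R)ᶜ.indicator (tailDensity n p s (minusPart u) x₀) z.2 +
    (ball x₀ R)ᶜ.indicator (tailDensity n p s (minusPart u) x₀) z.1 * (ball x₀ t).indicator 1 z.2

lemma tailInteraction_nonneg (z : Rn n × Rn n) : 0 ≤ tailInteraction n p s t R u x₀ z := by
  have h₁ : ∀ x, 0 ≤ (ball x₀ t).indicator (1 : Rn n → ℝ) x :=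
    indicator_nonneg fun _ _ => zero_le_one
  have h₂ : ∀ x, 0 ≤ (ball x₀ R)ᶜ.indicator (tailDensity n p s (minusPart u) x₀) x :=
    indicator_nonneg fun _ _ => tailDensity_nonneg _
  exact add_nonneg (mul_nonneg (h₁ _) (h₂ _)) (mul_nonneg (h₂ _) (h₁ _))

lemma integrable_tailInteraction
    (hT : IntegrableOn (tailDensity n p s (minusPart u) x₀) (ball x₀ R)ᶜ) :
    Integrable (tailInteraction n p s t R u x₀) := by
  have hG : Integrable ((ball x₀ t).indicator (1 : Rn n → ℝ)) :=
    (integrable_indicator_iff measurableSet_ball).2 (integrableOn_const measure_ball_lt_top.ne)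
  have hH := hT.integrable_indicator measurableSet_ball.compl
  exact (hG.mul_prod hH).add (hH.mul_prod hG)

lemma integral_tailInteraction
    (hT : IntegrableOn (tailDensity n p s (minusPart u) x₀) (ball x₀ R)ᶜ) :
    ∫ z, tailInteraction n p s t R u x₀ z =
      2 * (volume.real (ball x₀ t) *
        ∫ y in (ball x₀ R)ᶜ, tailDensity n p s (minusPart u) x₀ y) := by
  have hG : Integrable ((ball x₀ t).indicator (1 : Rn n → ℝ)) :=
    (integrable_indicator_iff measurableSet_ball).2 (integrableOn_const measure_ball_lt_top.ne)
  have hH := hT.integrable_indicator measurableSet_ball.compl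
  unfold tailInteraction
  rw [Measure.volume_eq_prod, integral_add (hG.mul_prod hH) (hH.mul_prod hG), integral_prod_mul,
    integral_prod_mul, integral_indicator measurableSet_ball.compl,
    integral_indicator_one measurableSet_ball]
  ring

lemma norm_sub_rpow_le_of_mem_ball (hR : 0 < R) (hps : 0 ≤ p * s) (ht : 4 * t ≤ 3 * R) {x y : Rn n}
    (hx : x ∈ ball x₀ t) (hy : y ∉ ball x₀ R) :
    ‖x - y‖ ^ (-(n : ℝ) - p * s) ≤
      4 ^ ((n : ℝ) + p * s) * ‖y - x₀‖ ^ (-(n : ℝ) - p * s) := by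
  rw [mem_ball_iff_norm] at hx
  rw [mem_ball_iff_norm, not_lt] at hy
  have hxy : ‖y - x₀‖ ≤ ‖x - x₀‖ + ‖x - y‖ := by
    rw [norm_sub_rev y, norm_sub_rev x x₀]
    exact norm_sub_le_norm_sub_add_norm_sub _ _ _
  rw [← neg_add']
  exact rpow_neg_le_mul_rpow_neg (hR.trans_le hy) four_pos (by linarith) (by positivity)

lemma IsCutoff.minusPart_rpow_mul_le (hη : IsCutoff η S (ball x₀ t) c) (hp : 1 < p) (hs : 0 ≤ s)
    (hR : 0 < R) (ht : 4 * t ≤ 3 * R) (hu : ∀ x ∈ ball x₀ R, 0 ≤ u x) (x y : Rn n) :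
    minusPart u y ^ (p - 1) * η x ^ p * ‖x - y‖ ^ (-(n : ℝ) - p * s) ≤
      4 ^ ((n : ℝ) + p * s) * ((ball x₀ t).indicator 1 x *
        (ball x₀ R)ᶜ.indicator (tailDensity n p s (minusPart u) x₀) y) := by
  have hp1 : 0 < p - 1 := by linarith
  by_cases hx : x ∈ ball x₀ t
  swap
  · rw [hη.eq_zero x hx, indicator_of_notMem hx, Real.zero_rpow (by linarith)]
    simp only [mul_zero, zero_mul, le_refl]
  by_cases hy : y ∈ ball x₀ R
  · rw [minusPart, max_eq_right (neg_nonpos.2 (hu y hy)), Real.zero_rpow hp1.ne',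
      indicator_of_notMem (notMem_compl_iff.2 hy)]
    simp only [mul_zero, zero_mul, le_refl]
  have hm := minusPart_nonneg (u := u) y
  rw [indicator_of_mem hx, indicator_of_mem (mem_compl hy), Pi.one_apply, one_mul, tailDensity,
    abs_of_nonneg hm]
  calc minusPart u y ^ (p - 1) * η x ^ p * ‖x - y‖ ^ (-(n : ℝ) - p * s)
      ≤ minusPart u y ^ (p - 1) * 1 *
          (4 ^ ((n : ℝ) + p * s) * ‖y - x₀‖ ^ (-(n : ℝ) - p * s)) := by
        gcongr
        · exact Real.rpow_le_one (hη.nonneg x) (hη.mem_Icc x).2 (by linarith)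
        · exact norm_sub_rpow_le_of_mem_ball hR (by nlinarith) ht hx hy
    _ = _ := by ring

lemma KernelClass.nonneg (hc : 0 ≤ cnps n p s) (hlam : 0 ≤ lam) (hK : KernelClass n p s lam Lam K)
    {x : Rn n} (hx : x ≠ 0) : 0 ≤ K x :=
  (by positivity : (0 : ℝ) ≤ _).trans (hK.2.2 x hx).1

lemma IsCutoff.Hp_sub_mul_logTest_sub_mul_kernel_le (hη : IsCutoff η S (ball x₀ t) c) (hp : 1 < p)
    (hs : 0 ≤ s) (hs1 : s < 1) (hb : 0 < b) (hlam : 0 < lam) (hlamLam : lam ≤ Lam)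
    (hK : KernelClass n p s lam Lam K) (hR : 0 < R) (ht : 4 * t ≤ 3 * R)
    (hu : ∀ x ∈ ball x₀ R, 0 ≤ u x) (z : Rn n × Rn n) :
    Hp p (u z.1 - u z.2) * (logTest p b u η z.1 - logTest p b u η z.2) * K (z.1 - z.2) ≤
      cnps n p s * Lam * 2 ^ (p - 1) * (gagliardoIntegrand n p s η z +
        b ^ (1 - p) * 4 ^ ((n : ℝ) + p * s) * tailInteraction n p s t R u x₀ z) := by
  obtain ⟨x, y⟩ := z
  have hc : 0 < cnps n p s := cnps_pos (by linarith) hs1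
  have hLam : 0 < Lam := hlam.trans_le hlamLam
  rcases eq_or_ne x y with rfl | hxy
  · have := gagliardoIntegrand_nonneg (p := p) (s := s) (u := η) (x, x)
    have := tailInteraction_nonneg (p := p) (s := s) (t := t) (R := R) (u := u) (x₀ := x₀) (x, x)
    simp only [sub_self, mul_zero, zero_mul]
    positivity
  have hK0 : 0 ≤ K (x - y) := hK.nonneg hc.le hlam.le (sub_ne_zero.2 hxy)
  have hηx := hη.nonneg x
  have hηy := hη.nonneg y
  have hmx := minusPart_nonneg (u := u) x
  have hmy := minusPart_nonneg (u := u) y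
  have hxy_tail := hη.minusPart_rpow_mul_le (p := p) (s := s) hp hs hR ht hu x y
  have hyx_tail := hη.minusPart_rpow_mul_le (p := p) (s := s) hp hs hR ht hu y x
  rw [norm_sub_rev] at hyx_tail
  set k := ‖x - y‖ ^ (-(n : ℝ) - p * s) with hk
  calc Hp p (u x - u y) * (logTest p b u η x - logTest p b u η y) * K (x - y)
      ≤ 2 ^ (p - 1) * (|η x - η y| ^ p + b ^ (1 - p) *
          (minusPart u y ^ (p - 1) * η x ^ p + minusPart u x ^ (p - 1) * η y ^ p)) *
            (cnps n p s * Lam * k) := by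
        refine mul_le_mul ?_ (hK.2.2 _ (sub_ne_zero.2 hxy)).2 hK0 (by positivity)
        exact hη.Hp_sub_mul_logTest_sub_le hp hb
          (fun x hx => hu x (ball_subset_ball (by linarith) hx)) x y
    _ = cnps n p s * Lam * 2 ^ (p - 1) * (gagliardoIntegrand n p s η (x, y) + b ^ (1 - p) *
          (minusPart u y ^ (p - 1) * η x ^ p * k + minusPart u x ^ (p - 1) * η y ^ p * k)) := by
        simp only [gagliardoIntegrand, ← hk]
        ring
    _ ≤ _ := by
        rw [mul_assoc (b ^ (1 - p))]
        gcongr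
        unfold tailInteraction
        linarith

lemma IsCutoff.Hp_sub_mul_logTest_sub_mul_kernel_le_neg (hη : IsCutoff η S T c) (hp : 1 < p)
    (hs1 : s < 1) (ha : 0 < a) (hb : 0 < b) (hlam : 0 < lam) (hK : KernelClass n p s lam Lam K)
    (hu : ∀ x ∈ S, 0 ≤ u x) {z : Rn n × Rn n} (hz : z ∈ S ×ˢ S) :
    Hp p (u z.1 - u z.2) * (logTest p b u η z.1 - logTest p b u η z.2) * K (z.1 - z.2) ≤
      -(cnps n p s * lam * (p - 1) * gagliardoIntegrand n p s (truncLog a b d u) z) := by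
  obtain ⟨x, y⟩ := z
  obtain ⟨hx, hy⟩ := hz
  rcases eq_or_ne x y with rfl | hxy
  · simp only [sub_self, mul_zero, zero_mul, gagliardoIntegrand_self (by linarith : p ≠ 0),
      neg_zero, le_refl]
  have hc : 0 < cnps n p s := cnps_pos (by linarith) hs1
  have : 0 < p - 1 := by linarith
  have hK' := hK.2.2 (x - y) (sub_ne_zero.2 hxy)
  have hK0 : 0 ≤ K (x - y) := hK.nonneg hc.le hlam.le (sub_ne_zero.2 hxy)
  calc Hp p (u x - u y) * (logTest p b u η x - logTest p b u η y) * K (x - y)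
      ≤ -((p - 1) * |truncLog a b d u x - truncLog a b d u y| ^ p) * K (x - y) := by
        gcongr
        exact hη.Hp_sub_mul_logTest_sub_le_truncLog hp ha hb hx hy (hu x hx) (hu y hy)
    _ ≤ -((p - 1) * |truncLog a b d u x - truncLog a b d u y| ^ p) *
          (cnps n p s * lam * ‖x - y‖ ^ (-(n : ℝ) - p * s)) :=
        mul_le_mul_of_nonpos_left hK'.1 (neg_nonpos.2 (by positivity))
    _ = _ := by
        unfold gagliardoIntegrand
        ring

lemma IsCutoff.Hp_sub_mul_logTest_sub_mul_kernel_add_indicator_le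
    (hη : IsCutoff η S (ball x₀ t) c) (hSt : S ⊆ ball x₀ t) (hp : 1 < p) (hs : 0 ≤ s)
    (hs1 : s < 1) (ha : 0 < a) (hb : 0 < b) (hlam : 0 < lam) (hlamLam : lam ≤ Lam)
    (hK : KernelClass n p s lam Lam K) (hR : 0 < R) (ht : 4 * t ≤ 3 * R)
    (hu : ∀ x ∈ ball x₀ R, 0 ≤ u x) (z : Rn n × Rn n) :
    Hp p (u z.1 - u z.2) * (logTest p b u η z.1 - logTest p b u η z.2) * K (z.1 - z.2) +
        cnps n p s * lam * (p - 1) *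
          (S ×ˢ S).indicator (gagliardoIntegrand n p s (truncLog a b d u)) z ≤
      cnps n p s * Lam * 2 ^ (p - 1) * (gagliardoIntegrand n p s η z +
        b ^ (1 - p) * 4 ^ ((n : ℝ) + p * s) * tailInteraction n p s t R u x₀ z) := by
  by_cases hz : z ∈ S ×ˢ S
  · have hc : 0 < cnps n p s := cnps_pos (by linarith) hs1
    have hLam : 0 < Lam := hlam.trans_le hlamLam
    have hη0 := gagliardoIntegrand_nonneg (p := p) (s := s) (u := η) z
    have htail := tailInteraction_nonneg (p := p) (s := s) (t := t) (R := R) (u := u) (x₀ := x₀) z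
    have hnear := hη.Hp_sub_mul_logTest_sub_mul_kernel_le_neg (d := d) hp hs1 ha hb hlam hK
      (fun x hx => hu x (ball_subset_ball (by linarith) (hSt hx))) hz
    rw [indicator_of_mem hz]
    exact (le_neg_iff_add_nonpos_right.1 hnear).trans (by positivity)
  · rw [indicator_of_notMem hz, mul_zero, add_zero]
    exact hη.Hp_sub_mul_logTest_sub_mul_kernel_le hp hs hs1 hb hlam hlamLam hK hR ht hu z

end PointwiseEnergy

section Potential

variable {n : ℕ} {p s q b c t : ℝ} {V g K u η : Rn n → ℝ} {S T Ω : Set (Rn n)} {x₀ : Rn n}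

lemma measurable_plusPart (hV : Measurable V) : Measurable (plusPart V) :=
  hV.max measurable_const

lemma plusPart_nonneg (x : Rn n) : 0 ≤ plusPart V x := le_max_right _ _

lemma lqNormOn_nonneg : 0 ≤ lqNormOn n q Ω V := by
  unfold lqNormOn
  positivity

lemma memLp_ofReal_of_integrable_rpow {α : Type*} [MeasurableSpace α] {μ : Measure α} {f : α → ℝ}
    (hq : 0 < q) (hf : AEStronglyMeasurable f μ) (hf0 : ∀ x, 0 ≤ f x)
    (hfq : Integrable (fun x => f x ^ q) μ) : MemLp f (ENNReal.ofReal q) μ := by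
  rw [← integrable_norm_rpow_iff hf (by simpa using hq) ENNReal.ofReal_ne_top,
    ENNReal.toReal_ofReal hq.le]
  simpa only [Real.norm_of_nonneg (hf0 _)] using hfq

lemma setIntegral_le_lqNormOn_mul_rpow (hq : 1 < q) (hTΩ : T ⊆ Ω) (hT : volume T ≠ ∞)
    (hV : Measurable V) (hV0 : ∀ x, 0 ≤ V x) (hVq : IntegrableOn (fun x => V x ^ q) Ω) :
    ∫ x in T, V x ≤ lqNormOn n q Ω V * volume.real T ^ (1 - 1 / q) := by
  have hqq' : q.HolderConjugate q.conjExponent := .conjExponent hq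
  have hexp : 1 / q.conjExponent = 1 - 1 / q := by
    rw [one_div, one_div, hqq'.one_sub_inv]
  have : IsFiniteMeasure (volume.restrict T) := isFiniteMeasure_restrict.2 hT
  calc ∫ x in T, V x ≤ (∫ x in T, V x ^ q) ^ (1 / q) * volume.real T ^ (1 - 1 / q) := by
        simpa only [mul_one, Real.one_rpow, integral_const, smul_eq_mul, hexp,
          measureReal_restrict_apply_univ] using integral_mul_le_Lp_mul_Lq_of_nonneg hqq'
            (.of_forall hV0) (.of_forall fun _ => zero_le_one)
            (memLp_ofReal_of_integrable_rpow (by linarith) hV.aestronglyMeasurable hV0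
              (hVq.mono_set hTΩ)) (memLp_const (1 : ℝ))
    _ ≤ _ := by
        simp only [lqNormOn, abs_of_nonneg (hV0 _)]
        have hVq0 : ∀ x, 0 ≤ V x ^ q := fun x => Real.rpow_nonneg (hV0 x) q
        gcongr
        · exact integral_nonneg hVq0
        · exact .of_forall hVq0

/-- The local part of the requirements of the class `𝒫^{s,p}_q`: the negative part of `V` is
locally integrable in `Ω` and its positive part lies in `L^q(Ω)`. -/
structure IsLocalPotential (n : ℕ) (q : ℝ) (Ω : Set (Rn n)) (V : Rn n → ℝ) : Prop where
  measurable : Measurable V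
  minusPart_locInt : LocallyIntegrableOn (minusPart V) Ω
  plusPart_rpow_int : IntegrableOn (fun x => plusPart V x ^ q) Ω

lemma IsPotential.isLocalPotential (hV : IsPotential n p s q V) (hΩ : Bornology.IsBounded Ω) :
    IsLocalPotential n q Ω V where
  measurable := hV.measurable
  minusPart_locInt := hV.minusPart_locInt.locallyIntegrableOn Ω
  plusPart_rpow_int :=
    (hV.plusPart_locLq.integrableOn_isCompact hΩ.isCompact_closure).mono_set subset_closure

lemma IsLocalPotential.integrableOn_plusPart (hV : IsLocalPotential n q Ω V) (hq : 1 ≤ q)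
    (hTΩ : T ⊆ Ω) (hT : volume T ≠ ∞) : IntegrableOn (plusPart V) T := by
  have : IsFiniteMeasure (volume.restrict T) := isFiniteMeasure_restrict.2 hT
  exact (memLp_ofReal_of_integrable_rpow (by linarith)
    (measurable_plusPart hV.measurable).aestronglyMeasurable plusPart_nonneg
    (hV.plusPart_rpow_int.mono_set hTΩ)).integrable (by simpa using hq)

lemma IsLocalPotential.setIntegral_plusPart_le (hV : IsLocalPotential n q Ω V) (hq : 1 < q)
    (hTΩ : T ⊆ Ω) (hT : volume T ≠ ∞) :
    ∫ x in T, plusPart V x ≤ lqNormOn n q Ω (plusPart V) * volume.real T ^ (1 - 1 / q) :=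
  setIntegral_le_lqNormOn_mul_rpow hq hTΩ hT (measurable_plusPart hV.measurable) plusPart_nonneg
    hV.plusPart_rpow_int

/-- `u` is a supersolution of `L^p_K u + V|u|^{p-2}u = 0` in `Ω`, without prescribed exterior data
and without the requirement that `|u|^p V` be integrable. -/
def Supersolution (n : ℕ) (p s : ℝ) (Ω : Set (Rn n)) (K V u : Rn n → ℝ) : Prop :=
  MemX n p s Ω u ∧
    ∀ φ : Rn n → ℝ, MemY0 n p s Ω V φ → (∀ x, 0 ≤ φ x) →
      0 ≤ pairing n p K u φ + ∫ x : Rn n, V x * (|u x| ^ (p - 2) * u x) * φ x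

lemma WeakSupersolution.supersolution (hu : WeakSupersolution n p s Ω K V g u) :
    Supersolution n p s Ω K V u :=
  ⟨hu.1.1.1, hu.2⟩

lemma IsCutoff.memY0_logTest [NeZero n] (hη : IsCutoff η S (ball x₀ t) c)
    (hV : IsLocalPotential n q Ω V) (hq : 1 ≤ q) (hΩ : closedBall x₀ t ⊆ Ω) (hp : 1 ≤ p)
    (hs : 0 < s) (hs1 : s < 1) (hc : 0 < c) (hb : 0 < b) (hu : MemX n p s Ω u) :
    MemY0 n p s Ω V (logTest p b u η) := by
  have hTΩ : ball x₀ t ⊆ Ω := ball_subset_closedBall.trans hΩ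
  refine ⟨⟨hη.memX_logTest measurableSet_ball measure_ball_lt_top.ne hp hs hs1 hc hb hu,
    .of_forall fun x hx => logTest_eq_zero (by linarith) (hη.eq_zero x fun h => hx (hTΩ h))⟩,
    (hη.integrable_logTest_rpow_mul hp hb hu.1 plusPart_nonneg ?_).integrableOn,
    (hη.integrable_logTest_rpow_mul hp hb hu.1 minusPart_nonneg ?_).integrableOn⟩
  · exact hV.integrableOn_plusPart hq hTΩ measure_ball_lt_top.ne
  · exact (hV.minusPart_locInt.integrableOn_compact_subset hΩ
      (isCompact_closedBall x₀ t)).mono_set ball_subset_closedBall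

lemma rpow_sub_one_mul_logTest_le_one (hp : 1 ≤ p) (hb : 0 < b) {x : Rn n} (hη : η x ∈ Icc 0 1)
    (hx : 0 ≤ u x) : u x ^ (p - 1) * logTest p b u η x ≤ 1 := by
  have hη0 := hη.1
  have hub : 0 < u x + b := by linarith
  rw [logTest_of_nonneg hx]
  calc u x ^ (p - 1) * (η x ^ p * (u x + b) ^ (1 - p))
      ≤ (u x + b) ^ (p - 1) * (1 * (u x + b) ^ (1 - p)) := by
        gcongr
        · linarith
        · exact Real.rpow_le_one hη0 hη.2 (by linarith)
    _ = 1 := by rw [one_mul, rpow_one_sub hub.le, mul_inv_cancel₀ (by positivity)]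

lemma IsCutoff.integral_potential_mul_logTest_le (hη : IsCutoff η S T c) (hp : 1 < p) (hb : 0 < b)
    (hT : MeasurableSet T) (hV : IntegrableOn (plusPart V) T) (hu : ∀ x ∈ T, 0 ≤ u x) :
    ∫ x, V x * (|u x| ^ (p - 2) * u x) * logTest p b u η x ≤ ∫ x in T, plusPart V x := by
  by_cases hint : Integrable fun x => V x * (|u x| ^ (p - 2) * u x) * logTest p b u η x
  swap
  · rw [integral_undef hint]
    exact integral_nonneg plusPart_nonneg
  rw [← integral_indicator hT]
  refine integral_mono hint (hV.integrable_indicator hT) fun x => ?_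
  by_cases hx : x ∈ T
  · have hux := hu x hx
    have hφ := logTest_nonneg (p := p) (u := u) hb.le (hη.nonneg x)
    have hHp : |u x| ^ (p - 2) * u x = u x ^ (p - 1) := Hp_of_nonneg hp.ne' hux
    calc V x * (|u x| ^ (p - 2) * u x) * logTest p b u η x
        = V x * (u x ^ (p - 1) * logTest p b u η x) := by rw [hHp, mul_assoc]
      _ ≤ plusPart V x * (u x ^ (p - 1) * logTest p b u η x) := by
          gcongr
          exact le_max_left _ _
      _ ≤ plusPart V x :=
          mul_le_of_le_one_right (plusPart_nonneg x)
            (rpow_sub_one_mul_logTest_le_one hp.le hb (hη.mem_Icc x) hux)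
      _ = T.indicator (plusPart V) x := (indicator_of_mem hx _).symm
  · simp only [logTest_eq_zero (by linarith : p ≠ 0) (hη.eq_zero x hx), mul_zero,
      indicator_of_notMem hx, le_refl]

end Potential

section EnergyEstimate

variable {n : ℕ} [NeZero n] {p s q a b c d t R lam Lam : ℝ} {K V u η : Rn n → ℝ}
  {S Ω : Set (Rn n)} {x₀ : Rn n}

lemma IsCutoff.pairing_logTest_add_le (hη : IsCutoff η S (ball x₀ t) c) (hS : MeasurableSet S)
    (hSt : S ⊆ ball x₀ t) (hp : 1 < p) (hs : 0 < s) (hs1 : s < 1) (hlam : 0 < lam)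
    (hlamLam : lam ≤ Lam) (hK : KernelClass n p s lam Lam K) (hu : MemX n p s Ω u) (ha : 0 < a)
    (hb : 0 < b) (hc : 0 < c) (hR : 0 < R) (ht : 4 * t ≤ 3 * R) (hΩ : ball x₀ R ⊆ Ω)
    (hu0 : ∀ x ∈ ball x₀ R, 0 ≤ u x) :
    pairing n p K u (logTest p b u η) + cnps n p s * lam * (p - 1) *
        ∫ z in S ×ˢ S, gagliardoIntegrand n p s (truncLog a b d u) z ≤
      cnps n p s * Lam * 2 ^ (p - 1) * ∫ z, (gagliardoIntegrand n p s η z +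
        b ^ (1 - p) * 4 ^ ((n : ℝ) + p * s) * tailInteraction n p s t R u x₀ z) := by
  have hp0 : 0 < p := by linarith
  have htR : ball x₀ t ⊆ ball x₀ R := ball_subset_ball (by linarith)
  have hηgag := hη.integrable_gagliardoIntegrand (p := p) (s := s) measurableSet_ball
    measure_ball_lt_top.ne hp0 hs hs1 hc
  have htail := integrable_tailInteraction (t := t)
    (integrableOn_tailDensity_minusPart hp.le hs hR hΩ hu)
  have hφ := hη.memX_logTest measurableSet_ball measure_ball_lt_top.ne hp.le hs hs1 hc hb hu
  have hpair := integrable_pairing hp hs1 hlam.le hK hu hφ fun x hx =>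
    logTest_eq_zero hp0.ne' (hη.eq_zero x fun h => hx (hΩ (htR h)))
  have huS : ∀ x ∈ S, 0 ≤ u x := fun x hx => hu0 x (htR (hSt hx))
  have htrunc := integrableOn_gagliardoIntegrand_truncLog (d := d) hp0.le ha hb hS hu.1 huS
    (hu.2.2.mono_set fun z hz => Or.inl (hΩ (htR (hSt hz.1))))
  have hSS := hS.prod hS
  rw [pairing, ← integral_indicator hSS, ← integral_const_mul, ← integral_const_mul,
    ← integral_add hpair ((htrunc.integrable_indicator hSS).const_mul _)]
  refine integral_mono (hpair.add ((htrunc.integrable_indicator hSS).const_mul _))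
    ((hηgag.add (htail.const_mul _)).const_mul _) ?_
  exact hη.Hp_sub_mul_logTest_sub_mul_kernel_add_indicator_le hSt hp hs.le hs1 ha hb hlam hlamLam
    hK hR ht hu0

lemma IsCutoff.energy_truncLog_le (hη : IsCutoff η S (ball x₀ t) c) (hS : MeasurableSet S)
    (hSt : S ⊆ ball x₀ t) (hp : 1 < p) (hs : 0 < s) (hs1 : s < 1) (hlam : 0 < lam)
    (hlamLam : lam ≤ Lam) (hq : 1 < q) (hV : IsLocalPotential n q Ω V)
    (hK : KernelClass n p s lam Lam K) (hu : Supersolution n p s Ω K V u) (ha : 0 < a)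
    (hb : 0 < b) (hc : 0 < c) (hR : 0 < R) (ht : 4 * t ≤ 3 * R) (hΩ : ball x₀ R ⊆ Ω)
    (hu0 : ∀ x ∈ ball x₀ R, 0 ≤ u x) :
    cnps n p s * lam * (p - 1) *
        ∫ z in S ×ˢ S, gagliardoIntegrand n p s (truncLog a b d u) z ≤
      cnps n p s * Lam * 2 ^ (p - 1) *
          (2 * (volume.real (ball x₀ t) * (c ^ (p * s) * cutoffMass n p s)) +
            b ^ (1 - p) * 4 ^ ((n : ℝ) + p * s) * (2 * (volume.real (ball x₀ t) *
              ∫ y in (ball x₀ R)ᶜ, tailDensity n p s (minusPart u) x₀ y))) +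
        lqNormOn n q Ω (plusPart V) * volume.real (ball x₀ t) ^ (1 - 1 / q) := by
  have hp0 : 0 < p := by linarith
  have hLam : 0 < Lam := hlam.trans_le hlamLam
  have hcnps : 0 < cnps n p s := cnps_pos hp0 hs1
  have htR : closedBall x₀ t ⊆ ball x₀ R := closedBall_subset_ball (by linarith)
  have htR' := ball_subset_closedBall.trans htR
  have htail := integrableOn_tailDensity_minusPart hp.le hs hR hΩ hu.1
  have htest := hu.2 (logTest p b u η)
    (hη.memY0_logTest hV hq.le (htR.trans hΩ) hp.le hs hs1 hc hb hu.1)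
    fun x => logTest_nonneg hb.le (hη.nonneg x)
  have hpair := hη.pairing_logTest_add_le (d := d) hS hSt hp hs hs1 hlam hlamLam hK hu.1 ha hb hc
    hR ht hΩ hu0
  have hpot := (hη.integral_potential_mul_logTest_le hp hb measurableSet_ball
    (hV.integrableOn_plusPart hq.le (htR'.trans hΩ) measure_ball_lt_top.ne)
    fun x hx => hu0 x (htR' hx)).trans
      (hV.setIntegral_plusPart_le hq (htR'.trans hΩ) measure_ball_lt_top.ne)
  have hmajorant := mul_le_mul_of_nonneg_left
    (hη.integral_gagliardoIntegrand_le (p := p) (s := s) measurableSet_ball measure_ball_lt_top.ne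
      hp0 hs hs1 hc) (by positivity : 0 ≤ cnps n p s * Lam * 2 ^ (p - 1))
  rw [integral_add (hη.integrable_gagliardoIntegrand measurableSet_ball measure_ball_lt_top.ne
    hp0 hs hs1 hc) ((integrable_tailInteraction htail).const_mul _), integral_const_mul,
    integral_tailInteraction htail, mul_add] at hpair
  linarith

end EnergyEstimate

section BoundedMeanOscillation

variable {n : ℕ} {p s q a b d r t R ρ θ X N lam Lam : ℝ}
  {K V u : Rn n → ℝ} {Ω : Set (Rn n)} {x₀ : Rn n}

lemma volume_real_ball_pos (hr : 0 < r) : 0 < volume.real (ball x₀ r) :=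
  ENNReal.toReal_pos (measure_ball_pos volume x₀ hr).ne' measure_ball_lt_top.ne

variable [NeZero n]

lemma volume_real_ball (hr : 0 ≤ r) :
    volume.real (ball x₀ r) = r ^ n * volume.real (ball (0 : Rn n) 1) := by
  rw [measureReal_def, Measure.addHaar_ball _ _ hr, finrank_euclideanSpace_fin,
    ENNReal.toReal_mul, ENNReal.toReal_ofReal (by positivity), measureReal_def]

lemma sphereArea_pos : 0 < sphereArea n :=
  mul_pos (Nat.cast_pos.2 (NeZero.pos n)) (volume_real_ball_pos one_pos)

lemma tail_rpow (hp : 1 < p) (hs : 0 ≤ s) (hR : 0 ≤ R) :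
    tail n p s u x₀ R ^ (p - 1) =
      p * s / sphereArea n * R ^ (p * s) * ∫ y in (ball x₀ R)ᶜ, tailDensity n p s u x₀ y := by
  have hsphere := sphereArea_pos (n := n)
  have : 0 ≤ ∫ y in (ball x₀ R)ᶜ, tailDensity n p s u x₀ y :=
    integral_nonneg tailDensity_nonneg
  rw [tail, one_div]
  exact Real.rpow_inv_rpow (by positivity) (by linarith)

lemma tail_nonneg (hp : 0 ≤ p) (hs : 0 ≤ s) (hR : 0 ≤ R) : 0 ≤ tail n p s u x₀ R := by
  have hsphere := sphereArea_pos (n := n)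
  exact Real.rpow_nonneg (mul_nonneg (by positivity) (integral_nonneg tailDensity_nonneg)) _

lemma rpow_mul_integral_tailDensity (hp : 1 < p) (hs : 0 < s) (hr : 0 ≤ r) (hR : 0 < R) :
    r ^ (p * s) * ∫ y in (ball x₀ R)ᶜ, tailDensity n p s u x₀ y =
      sphereArea n / (p * s) * ((r / R) ^ (p * s) * tail n p s u x₀ R ^ (p - 1)) := by
  have hsphere := sphereArea_pos (n := n)
  rw [tail_rpow hp hs.le hR.le, Real.div_rpow hr hR.le]
  field_simp

lemma rpow_mul_volume_ball_rpow_le (hθ : n ≤ θ * q) (hq : 1 ≤ q) (hr : 0 < r) (hrρ : r ≤ ρ)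
    (hrt : r ≤ t) :
    r ^ θ * volume.real (ball x₀ t) ^ (-(1 / q)) ≤
      max 1 (volume.real (ball (0 : Rn n) 1))⁻¹ * max 1 ρ ^ θ := by
  set ω := volume.real (ball (0 : Rn n) 1)
  have hω : 0 < ω := volume_real_ball_pos one_pos
  have hθ' : 0 ≤ θ - n / q := by
    rw [sub_nonneg, div_le_iff₀ (by linarith)]
    exact hθ
  have hnq : 0 ≤ n / q := by positivity
  calc r ^ θ * volume.real (ball x₀ t) ^ (-(1 / q))
      ≤ r ^ θ * volume.real (ball x₀ r) ^ (-(1 / q)) := by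
        refine mul_le_mul_of_nonneg_left ?_ (by positivity)
        exact Real.rpow_le_rpow_of_nonpos (volume_real_ball_pos hr)
          (measureReal_mono (ball_subset_ball hrt) measure_ball_lt_top.ne)
          (neg_nonpos.2 (by positivity))
    _ = ω⁻¹ ^ (1 / q) * r ^ (θ - n / q) := by
        rw [volume_real_ball hr.le, Real.mul_rpow (by positivity) hω.le, ← Real.rpow_natCast,
          ← Real.rpow_mul hr.le, Real.inv_rpow hω.le, Real.rpow_neg hω.le, mul_left_comm,
          ← mul_assoc, ← Real.rpow_add hr, mul_comm]
        ring_nf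
    _ ≤ max 1 ω⁻¹ ^ (1 / q) * max 1 ρ ^ (θ - n / q) := by
        gcongr
        · exact le_max_right _ _
        · exact hrρ.trans (le_max_right _ _)
    _ ≤ max 1 ω⁻¹ ^ (1 : ℝ) * max 1 ρ ^ θ := by
        gcongr
        · exact le_max_left _ _
        · exact (div_le_one₀ (by linarith)).2 hq
        · exact le_max_left _ _
        · linarith
    _ = _ := by rw [Real.rpow_one]

/-- The constant of the scale-invariant logarithmic energy estimate on balls of radius at most `ρ`:
the three summands come from the cutoff, from the tail of `u` and from the potential. -/
def logEnergyConst (n : ℕ) (p s Lam ρ : ℝ) : ℝ :=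
  cnps n p s * Lam * 2 ^ p *
      (2 ^ (p * s) * cutoffMass n p s + 4 ^ ((n : ℝ) + p * s) * (sphereArea n / (p * s))) +
    max 1 (volume.real (ball (0 : Rn n) 1))⁻¹ * max 1 ρ ^ (p * s)

lemma logEnergyConst_pos (hp : 0 < p) (hs : 0 < s) (hs1 : s < 1) (hLam : 0 < Lam) :
    0 < logEnergyConst n p s Lam ρ := by
  have hcnps : 0 < cnps n p s := cnps_pos hp hs1
  have hmass : 0 ≤ cutoffMass n p s := cutoffMass_nonneg
  have hsphere := sphereArea_pos (n := n)
  unfold logEnergyConst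
  positivity

lemma add_add_le_logEnergyConst_mul (hp : 0 < p) (hs : 0 < s) (hs1 : s < 1) (hLam : 0 < Lam)
    (hX : 0 ≤ X) (hN : 0 ≤ N) :
    cnps n p s * Lam * 2 ^ p * (2 ^ (p * s) * cutoffMass n p s +
        4 ^ ((n : ℝ) + p * s) * (sphereArea n / (p * s)) * X) +
      max 1 (volume.real (ball (0 : Rn n) 1))⁻¹ * max 1 ρ ^ (p * s) * N ≤
      logEnergyConst n p s Lam ρ * (X + (1 + N)) := by
  have hcnps : 0 < cnps n p s := cnps_pos hp hs1
  have hmass : 0 ≤ cutoffMass n p s := cutoffMass_nonneg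
  have hsphere := sphereArea_pos (n := n)
  unfold logEnergyConst
  set A := cnps n p s * Lam * 2 ^ p
  set M := 2 ^ (p * s) * cutoffMass n p s
  set T := 4 ^ ((n : ℝ) + p * s) * (sphereArea n / (p * s))
  set P := max 1 (volume.real (ball (0 : Rn n) 1))⁻¹ * max 1 ρ ^ (p * s)
  have hcross : 0 ≤ A * M * (X + N) + A * T * (1 + N) + P * (1 + X) := by positivity
  linarith

lemma rpow_mul_energy_truncLog_ball_le (hp : 1 < p) (hs : 0 < s) (hs1 : s < 1) (hlam : 0 < lam)
    (hlamLam : lam ≤ Lam) (hqn : n / (p * s) ≤ q) (hq : 1 < q) (hV : IsLocalPotential n q Ω V)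
    (hK : KernelClass n p s lam Lam K) (hu : Supersolution n p s Ω K V u) (ha : 0 < a)
    (hb : 0 < b) (hr : 0 < r) (hrR : r < R / 2) (hrρ : r ≤ ρ) (hΩ : ball x₀ R ⊆ Ω)
    (hu0 : ∀ x ∈ ball x₀ R, 0 ≤ u x) :
    r ^ (p * s) * (cnps n p s * lam * (p - 1) *
        ∫ z in ball x₀ r ×ˢ ball x₀ r, gagliardoIntegrand n p s (truncLog a b d u) z) ≤
      volume.real (ball x₀ (3 / 2 * r)) * (cnps n p s * Lam * 2 ^ p *
        (2 ^ (p * s) * cutoffMass n p s + 4 ^ ((n : ℝ) + p * s) * (sphereArea n / (p * s)) *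
          (1 / b ^ (p - 1) * (r / R) ^ (p * s) * tail n p s (minusPart u) x₀ R ^ (p - 1))) +
        max 1 (volume.real (ball (0 : Rn n) 1))⁻¹ * max 1 ρ ^ (p * s) *
          lqNormOn n q Ω (plusPart V)) := by
  obtain ⟨η, hη⟩ := exists_isCutoff_thickening (ball x₀ r) (half_pos hr)
  rw [_root_.thickening_ball (half_pos hr) hr, show r / 2 + r = 3 / 2 * r by ring] at hη
  have hR : 0 < R := by linarith
  have henergy := hη.energy_truncLog_le (d := d) measurableSet_ball
    (ball_subset_ball (by linarith)) hp hs hs1 hlam hlamLam hq hV hK hu ha hb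
    (inv_pos.2 (half_pos hr)) hR (by linarith) hΩ hu0
  have hW : 0 < volume.real (ball x₀ (3 / 2 * r)) := volume_real_ball_pos (by linarith)
  set W := volume.real (ball x₀ (3 / 2 * r))
  set N := lqNormOn n q Ω (plusPart V)
  have hcutoff : r ^ (p * s) * (r / 2)⁻¹ ^ (p * s) = 2 ^ (p * s) := by
    rw [← Real.mul_rpow hr.le (by positivity)]
    congr 1
    field_simp
  have htail := rpow_mul_integral_tailDensity (u := minusPart u) (x₀ := x₀) hp hs hr.le hR
  set J := ∫ y in (ball x₀ R)ᶜ, tailDensity n p s (minusPart u) x₀ y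
  have hpot : r ^ (p * s) * W ^ (-(1 / q)) ≤
      max 1 (volume.real (ball (0 : Rn n) 1))⁻¹ * max 1 ρ ^ (p * s) :=
    rpow_mul_volume_ball_rpow_le (by rwa [div_le_iff₀' (by positivity)] at hqn) hq.le hr hrρ
      (by linarith)
  calc _ ≤ _ := mul_le_mul_of_nonneg_left henergy (by positivity)
    _ = W * (cnps n p s * Lam * 2 ^ p * (r ^ (p * s) * (r / 2)⁻¹ ^ (p * s) * cutoffMass n p s +
          4 ^ ((n : ℝ) + p * s) * b ^ (1 - p) * (r ^ (p * s) * J)) +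
          r ^ (p * s) * W ^ (-(1 / q)) * N) := by
        rw [Real.rpow_sub_one two_ne_zero, sub_eq_add_neg 1 (1 / q), Real.rpow_add hW,
          Real.rpow_one]
        ring
    _ = W * (cnps n p s * Lam * 2 ^ p * (2 ^ (p * s) * cutoffMass n p s +
          4 ^ ((n : ℝ) + p * s) * (sphereArea n / (p * s)) *
            (1 / b ^ (p - 1) * (r / R) ^ (p * s) * tail n p s (minusPart u) x₀ R ^ (p - 1))) +
          r ^ (p * s) * W ^ (-(1 / q)) * N) := by
        rw [hcutoff, htail, rpow_one_sub hb.le]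
        ring
    _ ≤ _ := by
        have hN : 0 ≤ N := lqNormOn_nonneg
        gcongr

lemma setAverage_truncLog_sub_average_rpow_le (hp : 1 < p) (hs : 0 < s) (hs1 : s < 1)
    (hlam : 0 < lam) (hlamLam : lam ≤ Lam) (hqn : n / (p * s) ≤ q) (hq : 1 < q)
    (hV : IsLocalPotential n q Ω V) (hK : KernelClass n p s lam Lam K)
    (hu : Supersolution n p s Ω K V u) (ha : 0 < a) (hb : 0 < b) (hr : 0 < r) (hrR : r < R / 2)
    (hrρ : r ≤ ρ) (hΩ : ball x₀ R ⊆ Ω) (hu0 : ∀ x ∈ ball x₀ R, 0 ≤ u x) :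
    ⨍ x in ball x₀ r, |truncLog a b d u x - ⨍ y in ball x₀ r, truncLog a b d u y| ^ p ≤
      3 ^ n * 2 ^ (p * s) / (volume.real (ball (0 : Rn n) 1) * (cnps n p s * lam * (p - 1))) *
        (logEnergyConst n p s Lam ρ *
          (1 / b ^ (p - 1) * (r / R) ^ (p * s) * tail n p s (minusPart u) x₀ R ^ (p - 1) +
            (1 + lqNormOn n q Ω (plusPart V)))) := by
  have hp0 : 0 < p := by linarith
  have hp1 : 0 < p - 1 := by linarith
  have hR : 0 ≤ R := by linarith
  have hLam : 0 < Lam := hlam.trans_le hlamLam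
  have hX : 0 ≤ 1 / b ^ (p - 1) * (r / R) ^ (p * s) * tail n p s (minusPart u) x₀ R ^ (p - 1) :=
    mul_nonneg (by positivity) (Real.rpow_nonneg (tail_nonneg hp0.le hs.le hR) _)
  have hcnps : 0 < cnps n p s := cnps_pos hp0 hs1
  have hω : 0 < volume.real (ball (0 : Rn n) 1) := volume_real_ball_pos one_pos
  have hrR' : ball x₀ r ⊆ ball x₀ R := ball_subset_ball (by linarith)
  have hpoincare := setAverage_abs_sub_average_rpow_le (s := s) hp.le hs.le hr
    (integrableOn_truncLog (a := a) (b := b) (d := d) measure_ball_lt_top.ne hu.1.1)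
    (integrableOn_gagliardoIntegrand_truncLog hp0.le ha hb measurableSet_ball hu.1.1
      (fun x hx => hu0 x (hrR' hx))
      (hu.1.2.2.mono_set fun z hz => Or.inl (hΩ (hrR' hz.1))))
  have henergy := (rpow_mul_energy_truncLog_ball_le (d := d) hp hs hs1 hlam hlamLam hqn hq hV hK hu
    ha hb hr hrR hrρ hΩ hu0).trans (mul_le_mul_of_nonneg_left
      (add_add_le_logEnergyConst_mul hp0 hs hs1 hLam hX lqNormOn_nonneg) measureReal_nonneg)
  set I := ∫ z in ball x₀ r ×ˢ ball x₀ r, gagliardoIntegrand n p s (truncLog a b d u) z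
  calc _ ≤ (volume.real (ball x₀ r) ^ 2)⁻¹ * (2 * r) ^ ((n : ℝ) + p * s) * I := hpoincare
    _ = 2 ^ n * 2 ^ (p * s) /
          (r ^ n * volume.real (ball (0 : Rn n) 1) ^ 2 * (cnps n p s * lam * (p - 1))) *
          (r ^ (p * s) * (cnps n p s * lam * (p - 1) * I)) := by
        rw [volume_real_ball hr.le, Real.mul_rpow two_pos.le hr.le, Real.rpow_add hr,
          Real.rpow_add two_pos, Real.rpow_natCast, Real.rpow_natCast]
        field_simp
    _ ≤ _ := mul_le_mul_of_nonneg_left henergy (by positivity)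
    _ = _ := by
        rw [volume_real_ball (r := 3 / 2 * r) (by linarith), mul_pow, div_pow]
        field_simp

end BoundedMeanOscillation

end NLS

theorem truncated_log_of_supersolution_bmo_general
    (n : ℕ) (hn : 1 ≤ n) (p s lam Lam ρ : ℝ) (hp : 1 < p) (hs0 : 0 < s) (hs1 : s < 1)
    (hlam : 0 < lam) (hlamLam : lam ≤ Lam) :
    ∃ C : ℝ, 0 < C ∧
      ∀ q : ℝ, (n : ℝ) / (p * s) ≤ q → 1 < q →
      ∀ (Ω : Set (Rn n)) (V : Rn n → ℝ), IsLocalPotential n q Ω V →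
      ∀ K : Rn n → ℝ, KernelClass n p s lam Lam K →
      ∀ u : Rn n → ℝ, Supersolution n p s Ω K V u →
      ∀ (x₀ : Rn n) (R : ℝ), ball x₀ R ⊆ Ω → (∀ x ∈ ball x₀ R, 0 ≤ u x) →
      ∀ a b : ℝ, 0 < a → 0 < b → ∀ d r : ℝ, 0 < r → r < R / 2 → r ≤ ρ →
        (⨍ x in ball x₀ r,
            |truncLog a b d u x - (⨍ y in ball x₀ r, truncLog a b d u y)| ^ p) ≤
          C * (1 / b ^ (p - 1) * (r / R) ^ (p * s) *
                tail n p s (minusPart u) x₀ R ^ (p - 1) +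
              (1 + lqNormOn n q Ω (plusPart V))) := by
  have : NeZero n := ⟨by omega⟩
  have hp0 : 0 < p := by linarith
  have hcnps : 0 < cnps n p s := cnps_pos hp0 hs1
  have hω : 0 < volume.real (ball (0 : Rn n) 1) := volume_real_ball_pos one_pos
  have henergy : 0 < logEnergyConst n p s Lam ρ :=
    logEnergyConst_pos hp0 hs0 hs1 (hlam.trans_le hlamLam)
  refine ⟨3 ^ n * 2 ^ (p * s) / (volume.real (ball (0 : Rn n) 1) *
    (cnps n p s * lam * (p - 1))) * logEnergyConst n p s Lam ρ,
    mul_pos (div_pos (by positivity) (mul_pos hω (mul_pos (by positivity) (by linarith)))) henergy,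
    ?_⟩
  intro q hqn hq Ω V hV K hK u hu x₀ R hΩ hu0 a b ha hb d r hr hrR hrρ
  rw [mul_assoc _ (logEnergyConst n p s Lam ρ)]
  exact setAverage_truncLog_sub_average_rpow_le hp hs0 hs1 hlam hlamLam hqn hq hV hK hu ha hb hr
    hrR hrρ hΩ hu0

/-- the truncated logarithm of a weak supersolution has bounded
mean oscillation (Corollary 5.2). -/
theorem truncated_log_of_supersolution_bmo
    (n : ℕ) (hn : 1 ≤ n) (p s lam Lam : ℝ)
    (hp : 1 < p) (hs0 : 0 < s) (hs1 : s < 1)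
    (hlam : 0 < lam) (hlamLam : lam ≤ Lam)
    (Ω : Set (Rn n)) (hΩopen : IsOpen Ω) (hΩconn : IsConnected Ω)
    (hΩbdd : Bornology.IsBounded Ω) :
    ∃ C : ℝ, 0 < C ∧
      ∀ q : ℝ, (n : ℝ) / (p * s) < q → 1 < (n : ℝ) / (p * s) →
      ∀ V : Rn n → ℝ, IsPotential n p s q V →
      ∀ g : Rn n → ℝ, MemWsp n p s Set.univ g →
      ∀ K : Rn n → ℝ, KernelClass n p s lam Lam K →
      ∀ u : Rn n → ℝ, WeakSupersolution n p s Ω K V g u →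
      ∀ (x₀ : Rn n) (R : ℝ), 0 < R → Metric.ball x₀ R ⊆ Ω →
        (∀ x ∈ Metric.ball x₀ R, 0 ≤ u x) →
      ∀ a b : ℝ, 0 < a → a < 1 → 0 < b → b < 1 → ∀ d : ℝ, 0 < d →
      let vbar : Rn n → ℝ :=
        fun x => min (max (Real.log ((a + b) / (u x + b))) 0) d
      ∀ r : ℝ, 0 < r → r < R / 2 →
        (⨍ x in Metric.ball x₀ r, |vbar x - (⨍ y in Metric.ball x₀ r, vbar y)| ^ p) ≤
          C * (1 / b ^ (p - 1) * (r / R) ^ (p * s) *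
                tail n p s (minusPart u) x₀ R ^ (p - 1) +
              (1 + lqNormOn n q Ω (plusPart V))) := by
  have : NeZero n := ⟨by omega⟩
  obtain ⟨C, hC, hbound⟩ := truncated_log_of_supersolution_bmo_general n hn p s lam Lam
    (diam Ω) hp hs0 hs1 hlam hlamLam
  refine ⟨C, hC, ?_⟩
  intro q hqn hn1 V hV g _ K hK u hu x₀ R hR hΩ hu0 a b ha _ hb _ d _ _ r hr hrR
  have hRΩ : 2 * R ≤ diam Ω := (diam_ball_eq x₀ hR.le).symm.trans_le (diam_mono hΩ hΩbdd)
  exact hbound q hqn.le (hn1.trans hqn) Ω V (hV.isLocalPotential hΩbdd) K hK u hu.supersolution x₀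
    R hΩ hu0 a b ha hb d r hr hrR (by linarith)
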